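/- arXiv:1010.3393 — 7 statements merged into one kernel-verified Lean document; each statement's English description precedes it below -/
import Mathlib

section
/- Fix an integer d ≥ 2 and a real number B ≥ 1. The set of monic centred post-critically finite polynomials f(z) = z^d + a_{d−2}z^{d−2} + ⋯ + a₁z + a₀ ∈ ℚ̄[z] such that [ℚ(aᵢ):ℚ] ≤ B for every coefficient aᵢ is finite. -/
/-!
Every coefficient of a monic centred post-critically finite polynomial of degree `d = n + 1` is
bounded, in terms of `d` only, at all places of `ℚ̄`; a Northcott argument then gives finiteness.

Write `f = z^(n+1) + ∑_{i<n} α_i^(n+1-i) z^i` and let `c_1, …, c_n` be its critical points. If all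
critical values `f(c_j)` are zero, then `f'` divides `f`, which together with centredness forces
`f = z^(n+1)`, i.e. `α = c = 0` (`eq_zero_of_critical_values`). By the Nullstellensatz over `ℚ`, a
power of each coordinate of `(α, c)` is therefore a combination of the critical values with
coefficients in `ℚ[α, c]`, modulo the relations saying that the `c_j` are the critical points
(`exists_nullstellensatz`).

At any place, let `γ` be a coordinate of `(α, c)` of largest absolute value. The family is
homogeneous, so the identity may be evaluated at the rescaled point `(α, c) / γ`, whose coordinates
have absolute value at most `1`; it shows that some critical value has size at least a constant
times `|γ|^(n+1)`. If `|γ|` exceeds an explicit constant, this critical value lies in the region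
where the leading term of `f` dominates, so its orbit escapes and is infinite. Hence `|γ|` is
bounded, by a uniform constant at the archimedean places (`exists_complex_bound`), and such that
`M γ` is integral at every valuation for one nonzero integer `M` clearing the denominators of the
identity (`exists_valuation_bound`).

An element of `ℚ̄` lying in all valuation rings is an algebraic integer, so `M^(n+1)` times each
coefficient of `f` is an algebraic integer of bounded degree with bounded conjugates, and there are
only finitely many of those (`finite_of_bounded`).
-/

open Polynomial IsDedekindDomain
open scoped Classical

noncomputable section

/-- A fixed algebraic closure of `ℚ`. -/
abbrev Qbar : Type := AlgebraicClosure ℚ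

namespace PCF

/-- `f` is a monic centred polynomial of degree `d`:
`f(z) = z^d + a_{d-2} z^{d-2} + ⋯ + a_1 z + a_0`. -/
def MonicCentred (f : Polynomial Qbar) (d : ℕ) : Prop :=
  f.Monic ∧ f.natDegree = d ∧ f.coeff (d - 1) = 0

/-! ### The universal polynomial and its critical points -/

/-- The monic centred polynomial `z^(n+1) + ∑_{i<n} α_i^(n+1-i) z^i` of degree `n + 1`. Writing the
`i`-th coefficient as an `(n+1-i)`-th power makes the family homogeneous of degree `n + 1`
in `(α, z)`. -/
def genPoly {R : Type*} [CommRing R] {n : ℕ} (α : Fin n → R) : R[X] :=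
  X ^ (n + 1) + ∑ i : Fin n, C (α i ^ (n + 1 - (i : ℕ))) * X ^ (i : ℕ)

/-- A point `y = (α, c)` of the parameter space: the `c_j` are the critical points, with
multiplicity, of `genPoly α`. -/
def IsCrit {R : Type*} [CommRing R] {n : ℕ} (y : Fin n ⊕ Fin n → R) : Prop :=
  derivative (genPoly fun i => y (.inl i)) =
    C ((n + 1 : ℕ) : R) * ∏ j : Fin n, (X - C (y (.inr j)))

lemma genPoly_map {R S : Type*} [CommRing R] [CommRing S] {n : ℕ} (φ : R →+* S) (α : Fin n → R) :
    (genPoly α).map φ = genPoly fun i => φ (α i) := by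
  simp [genPoly, Polynomial.map_sum]

lemma IsCrit.map {R S : Type*} [CommRing R] [CommRing S] {n : ℕ} (φ : R →+* S)
    {y : Fin n ⊕ Fin n → R} (h : IsCrit y) : IsCrit fun s => φ (y s) := by
  have := congrArg (Polynomial.map φ) h
  rw [← derivative_map, genPoly_map] at this
  simpa [IsCrit, Polynomial.map_prod] using this

lemma genPoly_eval {R : Type*} [CommRing R] {n : ℕ} (α : Fin n → R) (z : R) :
    (genPoly α).eval z = z ^ (n + 1) + ∑ i : Fin n, α i ^ (n + 1 - (i : ℕ)) * z ^ (i : ℕ) := by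
  simp [genPoly, eval_finsetSum]

lemma genPoly_eval_scale {R : Type*} [CommRing R] {n : ℕ} (α : Fin n → R) (γ z : R) :
    (genPoly fun i => γ * α i).eval (γ * z) = γ ^ (n + 1) * (genPoly α).eval z := by
  simp only [genPoly_eval, mul_add, Finset.mul_sum, mul_pow]
  congr 1
  refine Finset.sum_congr rfl fun i _ => ?_
  have : γ ^ (n + 1) = γ ^ (n + 1 - (i : ℕ)) * γ ^ (i : ℕ) := by
    rw [← pow_add]; congr 1; omega
  rw [this]; ring

lemma genPoly_comp_scale {R : Type*} [CommRing R] {n : ℕ} (α : Fin n → R) (γ : R) :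
    (genPoly fun i => γ * α i).comp (C γ * X) = C (γ ^ (n + 1)) * genPoly α := by
  have h := genPoly_eval_scale (fun i => C (α i)) (C γ) X
  have h2 : ∀ (β : Fin n → R) (q : R[X]), (genPoly fun i => C (β i)).eval q = (genPoly β).comp q := by
    intro β q
    rw [← genPoly_map C β, comp, eval_map]
  rw [h2 α] at h
  rw [← h2]
  simpa using h

lemma IsCrit.of_scale {K : Type*} [Field K] {n : ℕ} {γ : K} (hγ : γ ≠ 0) {y : Fin n ⊕ Fin n → K}
    (h : IsCrit fun s => γ * y s) : IsCrit y := by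
  unfold IsCrit at h ⊢
  have h1 := congrArg derivative (genPoly_comp_scale (fun i => y (.inl i)) γ)
  rw [derivative_comp, h] at h1
  have h3 : (∏ j : Fin n, (X - C (γ * y (.inr j)))).comp (C γ * X) =
      C (γ ^ n) * ∏ j : Fin n, (X - C (y (.inr j))) := by
    rw [prod_comp]
    have : ∀ j : Fin n, (X - C (γ * y (.inr j))).comp (C γ * X) = C γ * (X - C (y (.inr j))) := by
      intro j; simp [mul_sub]
    rw [Finset.prod_congr rfl fun j _ => this j, Finset.prod_mul_distrib]
    simp
  rw [mul_comp, h3, derivative_C_mul, derivative_C_mul] at h1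
  have hne : (C (γ ^ (n + 1)) : K[X]) ≠ 0 := by simpa using hγ
  apply mul_left_cancel₀ hne
  rw [← h1]
  simp only [derivative_X, C_comp, pow_succ, C_mul]
  ring

lemma genPoly_coeff {R : Type*} [CommRing R] {n : ℕ} (α : Fin n → R) (k : ℕ) :
    (genPoly α).coeff k = if h : k < n then α ⟨k, h⟩ ^ (n + 1 - k) else
      if k = n + 1 then 1 else 0 := by
  simp only [genPoly, coeff_add, coeff_X_pow, finsetSum_coeff, coeff_C_mul]
  by_cases h : k < n
  · rw [dif_pos h, Finset.sum_eq_single (⟨k, h⟩ : Fin n)]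
    · rw [if_neg (by omega)]; simp
    · intro b _ hb
      have : k ≠ b := fun h => hb (Fin.ext h.symm)
      simp [this]
    · simp
  · rw [dif_neg h, Finset.sum_eq_zero, add_zero]
    intro b _
    have : k ≠ b := by have := b.2; omega
    simp [this]

lemma genPoly_natDegree {R : Type*} [CommRing R] [Nontrivial R] {n : ℕ} (α : Fin n → R) :
    (genPoly α).natDegree = n + 1 := by
  apply natDegree_eq_of_le_of_coeff_ne_zero
  · rw [natDegree_le_iff_coeff_eq_zero]
    intro N hN
    rw [genPoly_coeff, dif_neg (by omega), if_neg (by omega)]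
  · simp [genPoly_coeff]

lemma genPoly_ne_zero {R : Type*} [CommRing R] [Nontrivial R] {n : ℕ} (α : Fin n → R) :
    genPoly α ≠ 0 := by
  intro h
  have := genPoly_natDegree α
  simp [h] at this

/-! ### The nullcone of the critical values -/

/-- If all critical values of `F = genPoly α` vanish, then `F'` divides `F`, so
`(n+1) F = (z - a) F'`; comparing coefficients forces `F = z^(n+1)`. -/
lemma eq_zero_of_critical_values {K : Type*} [Field K] [CharZero K] [IsAlgClosed K] {n : ℕ}
    {y : Fin n ⊕ Fin n → K} (hy : IsCrit y)
    (hv : ∀ j, (genPoly fun i => y (.inl i)).eval (y (.inr j)) = 0) (s : Fin n ⊕ Fin n) :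
    y s = 0 := by
  set F := genPoly fun i => y (.inl i) with hF
  have hn0 : ((n : K) + 1) ≠ 0 := by exact_mod_cast Nat.succ_ne_zero n
  have hF0 : F ≠ 0 := genPoly_ne_zero _
  have hdeg : F.natDegree = n + 1 := genPoly_natDegree _
  have hD : derivative F = C ((n + 1 : ℕ) : K) * ∏ j : Fin n, (X - C (y (.inr j))) := hy
  have hP0 : (∏ j : Fin n, (X - C (y (.inr j)))) ≠ 0 :=
    Finset.prod_ne_zero_iff.2 fun j _ => X_sub_C_ne_zero _
  have hD0 : derivative F ≠ 0 := by
    rw [hD]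
    refine mul_ne_zero ?_ hP0
    rw [Ne, C_eq_zero]; push_cast; exact hn0
  have hroot : ∀ t, (derivative F).IsRoot t → F.IsRoot t := by
    intro t ht
    have : ∏ j : Fin n, (t - y (.inr j)) = 0 := by
      have h := ht
      rw [IsRoot, hD, eval_mul, eval_C, eval_prod] at h
      rcases mul_eq_zero.1 h with h | h
      · exact absurd h (by push_cast; exact hn0)
      · simpa using h
    obtain ⟨j, -, hj⟩ := Finset.prod_eq_zero_iff.1 this
    rw [sub_eq_zero.1 hj]
    exact hv j
  have hdvd : derivative F ∣ F := by
    rw [IsAlgClosed.dvd_iff_roots_le_roots hD0 hF0, Multiset.le_iff_count]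
    intro t
    rw [count_roots, count_roots]
    by_cases ht : (derivative F).IsRoot t
    · rw [derivative_rootMultiplicity_of_root (hroot t ht)]
      omega
    · rw [rootMultiplicity_eq_zero ht]; omega
  obtain ⟨Q, hQ⟩ := hdvd
  have hDdeg : (derivative F).natDegree = n := by
    rw [natDegree_derivative, hdeg]; rfl
  have hQ0 : Q ≠ 0 := by rintro rfl; simp at hQ; exact hF0 hQ
  have hQdeg : Q.natDegree ≤ 1 := by
    have h := congrArg natDegree hQ
    rw [natDegree_mul hD0 hQ0, hdeg, hDdeg] at h
    omega
  obtain ⟨u, w, rfl⟩ : ∃ u w, Q = C u * X + C w := exists_eq_X_add_C_of_natDegree_le_one hQdeg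
  have hc : ∀ k, F.coeff (k + 1) = F.coeff (k + 1) * (k + 1) * u + F.coeff (k + 2) * (k + 2) * w := by
    intro k
    have h := congrArg (fun p => coeff p (k + 1)) hQ
    simp only [mul_add, coeff_add, ← mul_assoc, coeff_mul_X, coeff_mul_C, mul_comm _ (C u),
      coeff_C_mul, coeff_derivative] at h
    push_cast at h
    linear_combination h
  have hc0 : F.coeff 0 = F.coeff 1 * w := by
    have h := congrArg (fun p => coeff p 0) hQ
    simp only [mul_add, coeff_add, ← mul_assoc, mul_comm _ (C u), coeff_mul_C,
      coeff_derivative] at h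
    simpa [mul_comm, mul_assoc] using h
  have ctop : F.coeff (n + 1) = 1 := by simp [hF, genPoly_coeff]
  have cn : F.coeff n = 0 := by simp [hF, genPoly_coeff]
  have ctop2 : F.coeff (n + 2) = 0 := by simp [hF, genPoly_coeff]
  have hu : (n + 1 : K) * u = 1 := by
    have := hc n
    rw [ctop, ctop2] at this
    linear_combination -this
  -- the coefficient of `z^n` vanishes because `F` is centred, so the remaining root is `0`
  have hw : w = 0 := by
    rcases n with _ | m
    · have := hc0
      rw [cn, ctop] at this
      simpa using this.symm
    · have := hc m
      rw [cn, ctop] at this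
      have h2 : ((m : K) + 2) ≠ 0 := by exact_mod_cast (by omega : m + 2 ≠ 0)
      have : ((m : K) + 2) * w = 0 := by linear_combination -this
      exact (mul_eq_zero.1 this).resolve_left h2
  have hlow : ∀ k < n, F.coeff k = 0 := by
    intro k hk
    rcases k with _ | k
    · rw [hc0, hw, mul_zero]
    · have := hc k
      rw [hw, mul_zero, add_zero] at this
      have h2 : ((n : K) - k) ≠ 0 := by
        rw [sub_ne_zero]; exact_mod_cast (by omega : n ≠ k)
      have h3 : F.coeff (k + 1) * (n - k) = 0 := by
        linear_combination (n + 1 : K) * this + F.coeff (k + 1) * (k + 1) * hu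
      exact (mul_eq_zero.1 h3).resolve_right h2
  have hα : ∀ i : Fin n, y (.inl i) = 0 := by
    intro i
    have := hlow i i.2
    rw [hF, genPoly_coeff, dif_pos i.2] at this
    exact pow_eq_zero_iff (by omega) |>.1 this
  rcases s with i | j
  · exact hα i
  · have h := hv j
    rw [hF, genPoly_eval, Finset.sum_eq_zero, add_zero] at h
    · exact pow_eq_zero_iff (by omega) |>.1 h
    · intro i _
      rw [hα i, zero_pow (by omega), zero_mul]

/-- By the Nullstellensatz over `ℚ`, a power of every coordinate of the parameter space is a
combination of the critical values, on the locus where the `c_j` are the critical points. -/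
lemma exists_nullstellensatz (n : ℕ) : ∃ (N : Fin n ⊕ Fin n → ℕ)
    (g : Fin n ⊕ Fin n → Fin n → MvPolynomial (Fin n ⊕ Fin n) ℚ),
    ∀ (L : Type) [Field L] [Algebra ℚ L] (y : Fin n ⊕ Fin n → L), IsCrit y → ∀ s,
      y s ^ N s = ∑ j, MvPolynomial.aeval y (g s j) *
        (genPoly fun i => y (.inl i)).eval (y (.inr j)) := by
  let S := MvPolynomial (Fin n ⊕ Fin n) ℚ
  let α : Fin n → S := fun i => MvPolynomial.X (.inl i)
  let val : Fin n → S := fun j => (genPoly α).eval (MvPolynomial.X (.inr j))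
  let rel : ℕ → S := fun k => (derivative (genPoly α) -
    C ((n + 1 : ℕ) : S) * ∏ j : Fin n, (X - C (MvPolynomial.X (.inr j) : S))).coeff k
  let I : Ideal S := Ideal.span (Set.range val) ⊔ Ideal.span (Set.range rel)
  have hval : ∀ (L : Type) [Field L] [Algebra ℚ L] (y : Fin n ⊕ Fin n → L) (j : Fin n),
      MvPolynomial.aeval y (val j) = (genPoly fun i => y (.inl i)).eval (y (.inr j)) := by
    intro L _ _ y j
    simp [val, genPoly_eval, α]
  have hrel : ∀ (L : Type) [Field L] [Algebra ℚ L] (y : Fin n ⊕ Fin n → L) (k : ℕ),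
      MvPolynomial.aeval y (rel k) = (derivative (genPoly fun i => y (.inl i)) -
        C ((n + 1 : ℕ) : L) * ∏ j : Fin n, (X - C (y (.inr j)))).coeff k := by
    intro L _ _ y k
    have : MvPolynomial.aeval y (rel k) = ((derivative (genPoly α) -
      C ((n + 1 : ℕ) : S) * ∏ j : Fin n, (X - C (MvPolynomial.X (.inr j) : S))).map
        (MvPolynomial.aeval y : S →ₐ[ℚ] L).toRingHom).coeff k := by
      rw [coeff_map]; rfl
    rw [this, Polynomial.map_sub, ← derivative_map, genPoly_map]
    simp [Polynomial.map_prod, α]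
  have hpow : ∀ s, ∃ N : ℕ, (MvPolynomial.X s : S) ^ N ∈ I := by
    intro s
    have : (MvPolynomial.X s : S) ∈ I.radical := by
      rw [← MvPolynomial.vanishingIdeal_zeroLocus_eq_radical (K := Qbar),
        MvPolynomial.mem_vanishingIdeal_iff]
      intro y hy
      rw [MvPolynomial.mem_zeroLocus_iff] at hy
      rw [MvPolynomial.aeval_X]
      refine eq_zero_of_critical_values (y := y) ?_ ?_ s
      · rw [IsCrit, ← sub_eq_zero]
        ext k
        rw [← hrel, coeff_zero]
        exact hy _ (Ideal.mem_sup_right (Ideal.subset_span ⟨k, rfl⟩))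
      · intro j
        rw [← hval]
        exact hy _ (Ideal.mem_sup_left (Ideal.subset_span ⟨j, rfl⟩))
    exact this
  choose N hN using hpow
  have hg : ∀ s, ∃ g : Fin n → S, ∃ w ∈ Ideal.span (Set.range rel),
      ∑ j, g j * val j + w = (MvPolynomial.X s : S) ^ N s := by
    intro s
    obtain ⟨u, hu, w, hw, h⟩ := Submodule.mem_sup.1 (hN s)
    obtain ⟨g, rfl⟩ := Ideal.mem_span_range_iff_exists_fun.1 hu
    exact ⟨g, w, hw, h⟩
  choose g w hw hgw using hg
  refine ⟨N, g, fun L _ _ y hy s => ?_⟩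
  have hw0 : MvPolynomial.aeval y (w s) = 0 := by
    have : Ideal.span (Set.range rel) ≤
        RingHom.ker (MvPolynomial.aeval y : S →ₐ[ℚ] L).toRingHom := by
      rw [Ideal.span_le]
      rintro _ ⟨k, rfl⟩
      rw [SetLike.mem_coe, RingHom.mem_ker]
      refine (hrel L y k).trans ?_
      rw [IsCrit] at hy
      rw [hy, sub_self, coeff_zero]
    exact this (hw s)
  have := congrArg (MvPolynomial.aeval y) (hgw s)
  rw [map_add, hw0, map_sum, map_pow, MvPolynomial.aeval_X, add_zero] at this
  rw [← this]
  exact Finset.sum_congr rfl fun j _ => by rw [map_mul, hval]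

/-! ### Escape of critical orbits -/

/-- If `size` strictly increases along `f` on a forward-invariant region that the orbit of `c`
enters, then that orbit is infinite. -/
lemma infinite_orbit {K Γ : Type*} [Preorder Γ] (f : K → K) (size : K → Γ) (P : K → Prop)
    (hP : ∀ w, P w → P (f w) ∧ size w < size (f w)) {c : K} (hc : P (f c)) :
    ¬ (Set.range fun n : ℕ => f^[n] c).Finite := by
  have hall : ∀ m : ℕ, P (f^[m + 1] c) := by
    intro m
    induction m with
    | zero => simpa using hc
    | succ m ih => rw [Function.iterate_succ_apply']; exact (hP _ ih).1
  have hmono : StrictMono fun m : ℕ => size (f^[m + 1] c) := by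
    refine strictMono_nat_of_lt_succ fun m => ?_
    have := (hP _ (hall m)).2
    rwa [← Function.iterate_succ_apply' f (m + 1) c] at this
  intro hfin
  have hinj : Function.Injective fun m : ℕ => f^[m + 1] c := fun a b hab =>
    hmono.injective (congrArg size hab)
  refine Set.infinite_range_of_injective hinj (hfin.subset ?_)
  rintro _ ⟨m, rfl⟩
  exact ⟨m + 1, rfl⟩

/-- The Nullstellensatz identity at `y = x / x_s`, rewritten using homogeneity. -/
lemma scaled_identity {n : ℕ} {N : Fin n ⊕ Fin n → ℕ}
    {g : Fin n ⊕ Fin n → Fin n → MvPolynomial (Fin n ⊕ Fin n) ℚ}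
    (h : ∀ (L : Type) [Field L] [Algebra ℚ L] (y : Fin n ⊕ Fin n → L), IsCrit y → ∀ s,
      y s ^ N s = ∑ j, MvPolynomial.aeval y (g s j) *
        (genPoly fun i => y (.inl i)).eval (y (.inr j)))
    {L : Type} [Field L] [Algebra ℚ L] {x : Fin n ⊕ Fin n → L} (hx : IsCrit x)
    {s : Fin n ⊕ Fin n} (hs : x s ≠ 0) :
    x s ^ (n + 1) = ∑ j, MvPolynomial.aeval (fun t => x t / x s) (g s j) *
        (genPoly fun i => x (.inl i)).eval (x (.inr j)) := by
  set γ := x s with hγ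
  let y : Fin n ⊕ Fin n → L := fun t => x t / γ
  have hxy : ∀ t, γ * y t = x t := fun t => mul_div_cancel₀ _ hs
  have hy : IsCrit y := by
    apply IsCrit.of_scale hs
    simpa only [hxy] using hx
  have h1 := h L y hy s
  have hys : y s = 1 := div_self hs
  rw [hys, one_pow] at h1
  have h2 : ∀ j, (genPoly fun i => x (.inl i)).eval (x (.inr j)) =
      γ ^ (n + 1) * (genPoly fun i => y (.inl i)).eval (y (.inr j)) := by
    intro j
    rw [← genPoly_eval_scale]
    simp only [hxy]
  simp only [h2, mul_left_comm _ (γ ^ (n + 1)), ← Finset.mul_sum]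
  rw [← h1, mul_one]

/-- Uniform archimedean bound: finite critical orbits bound the parameters in `ℂ`. -/
lemma exists_complex_bound (n : ℕ) : ∃ T : ℝ, ∀ x : Fin n ⊕ Fin n → ℂ, IsCrit x →
    (∀ j, (Set.range fun m : ℕ =>
      (fun w => (genPoly fun i => x (.inl i)).eval w)^[m] (x (.inr j))).Finite) →
    ∀ s, ‖x s‖ ≤ T := by
  obtain ⟨N, g, hg⟩ := exists_nullstellensatz n
  let size : MvPolynomial (Fin n ⊕ Fin n) ℚ → ℝ := fun p =>
    ∑ m ∈ p.support, ‖(algebraMap ℚ ℂ) (p.coeff m)‖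
  have hsize0 : ∀ p, 0 ≤ size p := fun p => Finset.sum_nonneg fun _ _ => norm_nonneg _
  have hsize : ∀ p (y : Fin n ⊕ Fin n → ℂ), (∀ t, ‖y t‖ ≤ 1) →
      ‖MvPolynomial.aeval y p‖ ≤ size p := by
    intro p y hy
    rw [MvPolynomial.aeval_def, MvPolynomial.eval₂_eq']
    refine (norm_sum_le _ _).trans (Finset.sum_le_sum fun m _ => ?_)
    rw [norm_mul, norm_prod]
    refine mul_le_of_le_one_right (norm_nonneg _) (Finset.prod_le_one (fun _ _ => norm_nonneg _) ?_)
    intro t _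
    rw [norm_pow]
    exact pow_le_one₀ (norm_nonneg _) (hy t)
  let G : ℝ := 1 + ∑ s, ∑ j, size (g s j)
  have hGs : ∀ s, ∑ j, size (g s j) ≤ G := by
    intro s
    have := Finset.single_le_sum (f := fun s => ∑ j, size (g s j))
      (fun s _ => Finset.sum_nonneg fun j _ => hsize0 _) (Finset.mem_univ s)
    simp only [G]; linarith
  have hG1 : 1 ≤ G := by
    have : 0 ≤ ∑ s, ∑ j, size (g s j) :=
      Finset.sum_nonneg fun s _ => Finset.sum_nonneg fun j _ => hsize0 _
    simp only [G]; linarith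
  refine ⟨2 * (n + 1) * G, fun x hx horb t => ?_⟩
  have : Nonempty (Fin n ⊕ Fin n) := ⟨t⟩
  have hn : 1 ≤ n := by
    rcases t with i | i <;> exact Nat.one_le_iff_ne_zero.2 (fun h => by subst h; exact i.elim0)
  have hnR : (1 : ℝ) ≤ n := by exact_mod_cast hn
  obtain ⟨s, hs⟩ := Finite.exists_max fun t => ‖x t‖
  refine (hs t).trans ?_
  by_contra! hlt
  set γ := x s with hγ
  have hγ1 : 1 < ‖γ‖ := by nlinarith
  have hγ0 : γ ≠ 0 := by rw [← norm_pos_iff]; linarith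
  -- outside the disc of radius `2(n+1)‖γ‖` the leading term dominates
  have hesc : ∀ w : ℂ, 2 * (n + 1) * ‖γ‖ < ‖w‖ →
      ‖w‖ < ‖(genPoly fun i => x (.inl i)).eval w‖ := by
    intro w hw
    have hw1 : 1 < ‖w‖ := by nlinarith
    have hterm : ∀ i : Fin n, ‖x (.inl i) ^ (n + 1 - (i : ℕ)) * w ^ (i : ℕ)‖ ≤
        ‖w‖ ^ (n + 1) / (2 * (n + 1)) := by
      intro i
      have hi := i.2
      rw [norm_mul, norm_pow, norm_pow, le_div_iff₀ (by positivity)]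
      have e1 : n + 1 - (i : ℕ) = (n - i) + 1 := by omega
      have e2 : n + 1 = (n - i) + 1 + i := by omega
      have hle : ‖γ‖ ≤ ‖w‖ := by nlinarith
      have hα : ‖x (.inl i)‖ ≤ ‖γ‖ := hs _
      calc ‖x (.inl i)‖ ^ (n + 1 - (i : ℕ)) * ‖w‖ ^ (i : ℕ) * (2 * (n + 1))
          = ‖x (.inl i)‖ ^ (n - (i : ℕ)) * (2 * (n + 1) * ‖x (.inl i)‖) * ‖w‖ ^ (i : ℕ) := by
            rw [e1, pow_succ]; ring
        _ ≤ ‖w‖ ^ (n - (i : ℕ)) * ‖w‖ * ‖w‖ ^ (i : ℕ) := by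
            gcongr
            · exact hα.trans hle
            · nlinarith
        _ = ‖w‖ ^ (n + 1) := by
            conv_rhs => rw [e2]
            rw [pow_add, pow_succ]
    have hsum : ‖∑ i : Fin n, x (.inl i) ^ (n + 1 - (i : ℕ)) * w ^ (i : ℕ)‖ ≤ ‖w‖ ^ (n + 1) / 2 := by
      refine (norm_sum_le _ _).trans ((Finset.sum_le_sum fun i _ => hterm i).trans ?_)
      rw [Finset.sum_const, Finset.card_univ, Fintype.card_fin, nsmul_eq_mul]
      rw [mul_div_assoc', div_le_div_iff₀ (by positivity) (by positivity)]
      have : 0 ≤ ‖w‖ ^ (n + 1) := by positivity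
      nlinarith
    have hpow : ‖w‖ ^ 2 ≤ ‖w‖ ^ (n + 1) := pow_le_pow_right₀ hw1.le (by omega)
    rw [genPoly_eval]
    have htri := norm_sub_le_norm_add (w ^ (n + 1))
      (∑ i : Fin n, x (.inl i) ^ (n + 1 - (i : ℕ)) * w ^ (i : ℕ))
    rw [norm_pow] at htri
    have : 4 < ‖w‖ := by nlinarith
    nlinarith
  have hbd : ∀ j, ‖(genPoly fun i => x (.inl i)).eval (x (.inr j))‖ ≤ 2 * (n + 1) * ‖γ‖ := by
    intro j
    by_contra! hj
    exact infinite_orbit (fun w => (genPoly fun i => x (.inl i)).eval w) (fun w => ‖w‖)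
      (fun w => 2 * (n + 1) * ‖γ‖ < ‖w‖) (fun w hw => ⟨hw.trans (hesc w hw), hesc w hw⟩) hj (horb j)
  have hid := congrArg norm (scaled_identity hg hx hγ0)
  rw [norm_pow] at hid
  have hle : ‖γ‖ ^ (n + 1) ≤ G * (2 * (n + 1) * ‖γ‖) := by
    rw [hid]
    refine (norm_sum_le _ _).trans (le_trans ?_
      (mul_le_mul_of_nonneg_right (hGs s) (by positivity)))
    rw [Finset.sum_mul]
    refine Finset.sum_le_sum fun j _ => ?_
    rw [norm_mul]
    refine mul_le_mul (hsize _ _ fun t => ?_) (hbd j) (norm_nonneg _) (hsize0 _)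
    rw [norm_div]
    exact div_le_one_of_le₀ (hs t) (norm_nonneg _)
  have hpow : ‖γ‖ ≤ ‖γ‖ ^ n := by
    simpa using pow_le_pow_right₀ hγ1.le hn
  rw [pow_succ] at hle
  have : ‖γ‖ ^ n ≤ 2 * (n + 1) * G := by
    refine le_of_mul_le_mul_right (a := ‖γ‖) ?_ (by linarith)
    linarith
  linarith

/-- Uniform non-archimedean bound: a fixed nonzero integer clears the denominators of the
parameters at every valuation of `ℚ̄`. -/
lemma exists_valuation_bound (n : ℕ) : ∃ M : ℤ, M ≠ 0 ∧ ∀ (A : ValuationSubring Qbar)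
    (x : Fin n ⊕ Fin n → Qbar), IsCrit x →
    (∀ j, (Set.range fun m : ℕ =>
      (fun w => (genPoly fun i => x (.inl i)).eval w)^[m] (x (.inr j))).Finite) →
    ∀ s, A.valuation ((M : Qbar) * x s) ≤ 1 := by
  obtain ⟨N, g, hg⟩ := exists_nullstellensatz n
  have : Algebra.IsAlgebraic ℤ ℚ := IsLocalization.isAlgebraic ℚ (nonZeroDivisors ℤ)
  obtain ⟨M, hM0, hM⟩ := Algebra.IsAlgebraic.exists_integral_multiples ℤ
    (Finset.univ.biUnion fun s => Finset.univ.biUnion fun j => (g s j).support.image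
      fun m => (g s j).coeff m)
  refine ⟨M, hM0, fun A x hx horb t => ?_⟩
  set v := A.valuation with hv
  have hint : ∀ z : Qbar, IsIntegral ℤ z → v z ≤ 1 := by
    intro z hz
    rw [hv, A.valuation_le_one_iff]
    have : IsIntegral A z := hz.tower_top
    obtain ⟨a, rfl⟩ := (IsIntegrallyClosed.isIntegral_iff (R := A)).1 this
    exact a.2
  have hM1 : v (M : Qbar) ≤ 1 := hint _ (isIntegral_algebraMap (R := ℤ) (x := M))
  have : Nonempty (Fin n ⊕ Fin n) := ⟨t⟩
  have hn : 1 ≤ n := by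
    rcases t with i | i <;> exact Nat.one_le_iff_ne_zero.2 (fun h => by subst h; exact i.elim0)
  obtain ⟨s, hs⟩ := Finite.exists_max fun t => v (x t)
  have hts : v ((M : Qbar) * x t) ≤ v ((M : Qbar) * x s) := by
    rw [map_mul, map_mul]
    exact mul_le_mul_right (hs t) _
  refine hts.trans ?_
  set γ := x s with hγ
  rw [map_mul]
  rcases le_or_gt (v γ) 1 with hγ1 | hγ1
  · exact mul_le_one' hM1 hγ1
  have hγ0 : γ ≠ 0 := by rintro h; rw [h, map_zero] at hγ1; exact not_lt_zero hγ1
  have hesc : ∀ w, v γ < v w → v w < v ((genPoly fun i => x (.inl i)).eval w) := by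
    intro w hw
    have hw1 : 1 < v w := hγ1.trans hw
    have hw0 : v w ≠ 0 := (zero_lt_one.trans hw1).ne'
    have hsum : v (∑ i : Fin n, x (.inl i) ^ (n + 1 - (i : ℕ)) * w ^ (i : ℕ)) < v (w ^ (n + 1)) := by
      refine Valuation.map_sum_lt _ (by simpa using hw0) fun i _ => ?_
      have hi := i.2
      have e2 : n + 1 = (n + 1 - i) + i := by omega
      rw [map_mul, map_pow, map_pow, map_pow]
      conv_rhs => rw [e2, pow_add]
      refine mul_lt_mul_of_pos_right ?_ (pow_pos (zero_lt_iff.2 hw0) _)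
      exact pow_lt_pow_left₀ ((hs _).trans_lt hw) zero_le (by omega)
    rw [genPoly_eval, Valuation.map_add_eq_of_lt_left _ hsum, map_pow]
    exact lt_self_pow₀ hw1 (by omega)
  have hbd : ∀ j, v ((genPoly fun i => x (.inl i)).eval (x (.inr j))) ≤ v γ := by
    intro j
    by_contra! hj
    exact infinite_orbit (fun w => (genPoly fun i => x (.inl i)).eval w) (fun w => v w)
      (fun w => v γ < v w) (fun w hw => ⟨hw.trans (hesc w hw), hesc w hw⟩) hj (horb j)
  have hcoef : ∀ j, v ((M : Qbar) * MvPolynomial.aeval (fun t => x t / γ) (g s j)) ≤ 1 := by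
    intro j
    rw [MvPolynomial.aeval_def, MvPolynomial.eval₂_eq', Finset.mul_sum]
    refine Valuation.map_sum_le _ fun m hm => ?_
    rw [← mul_assoc, map_mul, map_prod]
    refine mul_le_one' (hint _ ?_) (Finset.prod_le_one' fun t _ => ?_)
    · have h := hM ((g s j).coeff m) (by
        simp only [Finset.mem_biUnion, Finset.mem_univ, true_and, Finset.mem_image]
        exact ⟨s, j, m, hm, rfl⟩)
      have h2 := h.algebraMap (B := Qbar)
      simpa [zsmul_eq_mul] using h2
    · rw [map_pow, map_div₀]
      exact pow_le_one₀ zero_le (div_le_one_of_le₀ (hs t) zero_le)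
  have hid := congrArg (fun z => v ((M : Qbar) * z)) (scaled_identity hg hx hγ0)
  have hle : v (M : Qbar) * v γ ^ (n + 1) ≤ v γ := by
    rw [← map_pow, ← map_mul]
    refine hid.trans_le ?_
    rw [Finset.mul_sum]
    refine Valuation.map_sum_le _ fun j _ => ?_
    rw [← mul_assoc, map_mul]
    exact (mul_le_mul' (hcoef j) (hbd j)).trans_eq (one_mul _)
  have hγpos : 0 < v γ := zero_lt_one.trans hγ1
  rw [pow_succ, ← mul_assoc] at hle
  have hle2 : v (M : Qbar) * v γ ^ n ≤ 1 := by
    refine le_of_mul_le_mul_right (a := v γ) ?_ hγpos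
    rwa [one_mul]
  refine le_trans ?_ hle2
  exact mul_le_mul_right (le_self_pow₀ hγ1.le (by omega)) _

/-! ### Finiteness from bounded denominators, degrees and conjugates -/

/-- The `ℚ`-algebra structure found by instance search on `Qbar` is the one of a characteristic-zero
division ring, equal but not syntactically identical to that of `AlgebraicClosure ℚ`. -/
instance qbar_isAlgebraic : Algebra.IsAlgebraic ℚ Qbar := by
  convert! AlgebraicClosure.isAlgebraic ℚ

lemma isIntegral_of_valuation_le_one {z : Qbar}
    (h : ∀ A : ValuationSubring Qbar, A.valuation z ≤ 1) : IsIntegral ℤ z := by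
  by_contra hz
  have hz' : z ∉ (integralClosure ℤ Qbar).toSubring := hz
  have : IsIntegrallyClosedIn (integralClosure ℤ Qbar).toSubring Qbar :=
    inferInstanceAs (IsIntegrallyClosedIn (integralClosure ℤ Qbar) Qbar)
  obtain ⟨V, hV⟩ := Subring.exists_le_valuationSubring_of_isIntegrallyClosedIn hz'
  exact hV.2 ((V.valuation_le_one_iff z).1 (h V))

/-- There are finitely many algebraic numbers of bounded degree and bounded denominator all of whose
conjugates are bounded: the minimal polynomials of the integral multiples have bounded integer
coefficients. -/
lemma finite_of_bounded (D : ℕ) (M : ℤ) (hM : M ≠ 0) (T : ℝ) :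
    {a : Qbar | IsIntegral ℤ ((M : Qbar) * a) ∧
      Module.finrank ℚ (IntermediateField.adjoin ℚ {a} : IntermediateField ℚ Qbar) ≤ D ∧
      ∀ φ : Qbar →ₐ[ℚ] ℂ, ‖φ a‖ ≤ T}.Finite := by
  let E : ℝ := ‖(M : ℂ)‖ * T
  let K := Nat.ceil (max E 1 ^ D * D.choose (D / 2))
  have hfin := bUnion_roots_finite (algebraMap ℤ Qbar) D (Set.finite_Icc (-K : ℤ) K)
  have hM' : (M : Qbar) ≠ 0 := by exact_mod_cast hM
  refine Set.Finite.subset (hfin.preimage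
    (f := fun a : Qbar => (M : Qbar) * a) (mul_right_injective₀ hM').injOn) ?_
  rintro a ⟨ha, hdeg, hφ⟩
  rw [Set.mem_preimage]
  simp_rw [Set.mem_iUnion]
  have hmap := minpoly.isIntegrallyClosed_eq_field_fractions' ℚ ha
  have hQ : IsIntegral ℚ ((M : Qbar) * a) := ha.tower_top
  have hdeg2 : (minpoly ℚ ((M : Qbar) * a)).natDegree ≤ D := by
    have ha1 : IsIntegral ℚ a := Algebra.IsIntegral.isIntegral a
    have : FiniteDimensional ℚ (IntermediateField.adjoin ℚ {a} : IntermediateField ℚ Qbar) :=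
      IntermediateField.adjoin.finiteDimensional ha1
    let b : (IntermediateField.adjoin ℚ {a} : IntermediateField ℚ Qbar) :=
      (M : (IntermediateField.adjoin ℚ {a} : IntermediateField ℚ Qbar)) *
        IntermediateField.AdjoinSimple.gen ℚ a
    have hb : algebraMap _ Qbar b = (M : Qbar) * a := by simp [b]
    rw [← hb, minpoly.algebraMap_eq (FaithfulSMul.algebraMap_injective _ Qbar)]
    exact (minpoly.natDegree_le b).trans hdeg
  refine ⟨minpoly ℤ ((M : Qbar) * a), ⟨?_, fun i => ?_⟩,
    mem_rootSet.2 ⟨minpoly.ne_zero ha, minpoly.aeval ℤ _⟩⟩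
  · rw [← (minpoly.monic ha).natDegree_map (algebraMap ℤ ℚ), ← hmap]
    exact hdeg2
  · rw [Set.mem_Icc, ← abs_le, ← @Int.cast_le ℝ]
    have hbd : ‖((minpoly ℚ ((M : Qbar) * a)).map (algebraMap ℚ ℂ)).coeff i‖ ≤
        max E 1 ^ D * D.choose (D / 2) := by
      refine coeff_bdd_of_roots_le _ (minpoly.monic hQ) (IsAlgClosed.splits _) hdeg2 ?_ i
      intro z hz
      have hz' : z ∈ (minpoly ℚ ((M : Qbar) * a)).rootSet ℂ := by
        rw [rootSet, Finset.mem_coe, Multiset.mem_toFinset]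
        exact hz
      rw [← Algebra.IsAlgebraic.range_eval_eq_rootSet_minpoly] at hz'
      obtain ⟨φ, rfl⟩ := hz'
      simp only [map_mul, map_intCast, norm_mul]
      exact mul_le_mul_of_nonneg_left (hφ φ) (norm_nonneg _)
    refine le_trans (le_of_eq ?_) (hbd.trans (Nat.le_ceil _))
    rw [hmap, coeff_map, coeff_map]
    simp

lemma finite_polynomials {K : Type*} [Field K] (D : ℕ) {S : Set K} (hS : S.Finite) :
    {f : K[X] | f.natDegree ≤ D ∧ ∀ k, f.coeff k ∈ S}.Finite := by
  have hpi : (Set.univ.pi fun _ : Fin (D + 1) => S).Finite := Set.Finite.pi fun _ => hS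
  refine Set.Finite.of_finite_image (f := fun f : K[X] => fun i : Fin (D + 1) => f.coeff i)
    (hpi.subset ?_) ?_
  · rintro _ ⟨f, hf, rfl⟩ i -
    exact hf.2 i
  · intro f hf g hg hfg
    ext k
    by_cases hk : k < D + 1
    · exact congrFun hfg ⟨k, hk⟩
    · rw [coeff_eq_zero_of_natDegree_lt (by have := hf.1; omega),
        coeff_eq_zero_of_natDegree_lt (by have := hg.1; omega)]

/-- Over `ℚ̄`, every monic centred polynomial is `genPoly` of some parameters together with
its critical points. -/
lemma exists_parameters {n : ℕ} {f : Qbar[X]} (hf : MonicCentred f (n + 1)) :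
    ∃ x : Fin n ⊕ Fin n → Qbar, IsCrit x ∧ (genPoly fun i => x (.inl i)) = f := by
  obtain ⟨hmon, hdeg, hcen⟩ := hf
  have hα : ∀ i : Fin n, ∃ a : Qbar, a ^ (n + 1 - (i : ℕ)) = f.coeff i := fun i =>
    IsAlgClosed.exists_pow_nat_eq _ (by have := i.2; omega)
  choose α hα using hα
  have hgen : genPoly α = f := by
    ext k
    rw [genPoly_coeff]
    split_ifs with h1 h2
    · exact hα ⟨k, h1⟩
    · rw [h2, ← hdeg]; exact hmon.symm
    · by_cases h3 : k = n
      · rw [h3]; exact hcen.symm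
      · rw [coeff_eq_zero_of_natDegree_lt (by omega)]
  have hlead : (derivative f).leadingCoeff = ((n + 1 : ℕ) : Qbar) := by
    rw [leadingCoeff, natDegree_derivative, hdeg, coeff_derivative]
    have : f.coeff (n + 1 - 1 + 1) = 1 := by
      rw [Nat.add_sub_cancel, ← hdeg]; exact hmon
    rw [this]; push_cast; simp
  have hsplit := IsAlgClosed.splits (derivative f)
  have hcard : (derivative f).roots.toList.length = n := by
    rw [Multiset.length_toList, splits_iff_card_roots.1 hsplit, natDegree_derivative, hdeg]
    rfl
  refine ⟨Sum.elim α fun j => (derivative f).roots.toList.get (j.cast hcard.symm), ?_, hgen⟩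
  rw [IsCrit]
  simp only [Sum.elim_inl, Sum.elim_inr]
  rw [hgen]
  refine hsplit.eq_prod_roots.trans ?_
  rw [hlead]
  congr 1
  conv_lhs => rw [← Multiset.coe_toList (derivative f).roots]
  rw [Multiset.map_coe, Multiset.prod_coe, ← Fin.prod_univ_fun_getElem]
  exact (Fintype.prod_equiv (finCongr hcard.symm) _ _ fun j => by simp).symm

/-- For `d ≥ 2` and `B ≥ 1`, the set of monic centred post-critically
finite polynomials of degree `d` over `ℚ̄` all of whose coefficients generate an extension
of `ℚ` of degree at most `B` is finite. -/
theorem finite_pcf_of_bounded_degree (d : ℕ) (hd : 2 ≤ d) (B : ℝ) (hB : 1 ≤ B) :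
    {f : Polynomial Qbar | MonicCentred f d ∧
      (∀ i : ℕ, (Module.finrank ℚ
        (IntermediateField.adjoin ℚ {f.coeff i} : IntermediateField ℚ Qbar) : ℝ) ≤ B) ∧
      (∀ c : Qbar, (derivative f).eval c = 0 →
        (Set.range fun n : ℕ => (fun w => f.eval w)^[n] c).Finite)}.Finite := by
  obtain ⟨n, rfl⟩ : ∃ n, d = n + 1 := ⟨d - 1, by omega⟩
  obtain ⟨T, hT⟩ := exists_complex_bound n
  obtain ⟨M, hM0, hM⟩ := exists_valuation_bound n
  have hS := (finite_of_bounded ⌊B⌋₊ (M ^ (n + 1)) (pow_ne_zero _ hM0)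
    (max T 1 ^ (n + 1))).union (Set.toFinite ({0, 1} : Set Qbar))
  refine (finite_polynomials (n + 1) hS).subset ?_
  rintro f ⟨hf, hdeg, hpcf⟩
  refine ⟨hf.2.1.le, fun k => ?_⟩
  have hk := hdeg k
  obtain ⟨x, hx, rfl⟩ := exists_parameters hf
  have horb : ∀ j, (Set.range fun m : ℕ =>
      (fun w => (genPoly fun i => x (.inl i)).eval w)^[m] (x (.inr j))).Finite := by
    intro j
    refine hpcf _ ?_
    rw [IsCrit] at hx
    rw [hx, eval_mul, eval_prod, Finset.prod_eq_zero (Finset.mem_univ j) (by simp), mul_zero]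
  by_cases hkn : k < n
  · left
    refine ⟨isIntegral_of_valuation_le_one fun A => ?_, Nat.le_floor hk, fun φ => ?_⟩
    · have h1 := hM A x hx horb (.inl ⟨k, hkn⟩)
      have h2 : A.valuation (M : Qbar) ≤ 1 := by
        rw [A.valuation_le_one_iff]; exact intCast_mem A M
      rw [genPoly_coeff, dif_pos hkn]
      have : ((M ^ (n + 1) : ℤ) : Qbar) * x (.inl ⟨k, hkn⟩) ^ (n + 1 - k) =
          (M : Qbar) ^ k * ((M : Qbar) * x (.inl ⟨k, hkn⟩)) ^ (n + 1 - k) := by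
        rw [mul_pow, ← mul_assoc, ← pow_add]
        push_cast
        congr 2
        omega
      rw [this, map_mul, map_pow, map_pow]
      exact mul_le_one' (pow_le_one' h2 _) (pow_le_one' h1 _)
    · have horb' : ∀ j, (Set.range fun m : ℕ =>
          (fun w => (genPoly fun i => φ (x (.inl i))).eval w)^[m] (φ (x (.inr j)))).Finite := by
        intro j
        refine ((horb j).image φ).subset ?_
        rintro _ ⟨m, rfl⟩
        refine ⟨_, ⟨m, rfl⟩, ?_⟩
        refine Function.Semiconj.iterate_right (f := φ) (fun w => ?_) m _
        have := genPoly_map φ.toRingHom fun i => x (.inl i)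
        have h2 := eval_map_apply (f := φ.toRingHom) (p := genPoly fun i => x (.inl i)) w
        rw [this] at h2
        exact h2.symm
      have h1 := hT (fun s => φ (x s)) (hx.map φ.toRingHom) horb' (.inl ⟨k, hkn⟩)
      rw [genPoly_coeff, dif_pos hkn, map_pow, norm_pow]
      calc ‖φ (x (.inl ⟨k, hkn⟩))‖ ^ (n + 1 - k) ≤ max T 1 ^ (n + 1 - k) := by
            gcongr; exact h1.trans (le_max_left _ _)
        _ ≤ max T 1 ^ (n + 1) := pow_le_pow_right₀ (le_max_right _ _) (by omega)
  · right
    rw [genPoly_coeff, dif_neg hkn]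
    split_ifs <;> simp

end PCF
end
end

section
/- Let d ≥ 2 and let f(z) = z^d + a_{d−2}z^{d−2} + ⋯ + a₁z + a₀ ∈ ℂ[z] be a monic centred polynomial. If f is post-critically finite, then every coefficient aᵢ is algebraic over ℚ. -/
/-!
The algebraic numbers are the intersection of the valuation rings of `ℂ` that contain `ℚ`
(they form the integral closure of `ℚ` in `ℂ`). So if some coefficient of `f` were transcendental,
there would be a valuation `v` on `ℂ`, of residue characteristic zero, for which that coefficient
is not integral (`exists_valuationSubring`). Every bound below holds for an arbitrary
value group, so the rank of `v` plays no role.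

Write `f = z ^ d + ∑ j < d, a j * z ^ j` and choose `γ` of largest valuation among `(d - j)`-th
roots of the `a j`. Then `v (a j) ≤ v γ ^ (d - j)`, with equality for some `j`, and `1 < v γ`.
If `v γ < v z` then `v (f z) = v z ^ d > v z`, so the orbit of `z` is infinite
(`le_of_finite_orbit`). Hence every critical point `c` satisfies `v c ≤ v γ` and
`v (f c) ≤ v γ < v γ ^ d`.

The rescaled polynomial `g z = f (γ z) / γ ^ d` therefore has integral coefficients, integral
critical points, and critical values in the maximal ideal. Its reduction `h` over the residue field
is monic, `h'` splits, and each root of `h'` is a root of `h`. In characteristic zero a root of `h'`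
of multiplicity `m` is then a root of `h` of multiplicity `m + 1`, so if `h'` has `s` distinct roots
then `(d - 1) + s ≤ d`. Thus `s = 1` and `h = (z - u) ^ d` (`eq_pow_of_roots_derivative`).
Being centred, `h = z ^ d`, contradicting that some lower coefficient of `g` is a unit.
-/

open Polynomial

noncomputable section

namespace PCF

lemma exists_valuationSubring {x : ℂ} (hx : ¬ IsAlgebraic ℚ x) :
    ∃ A : ValuationSubring ℂ, (∀ q : ℚ, (q : ℂ) ∈ A) ∧ x ∉ A := by
  have : IsIntegrallyClosedIn (integralClosure ℚ ℂ).toSubring ℂ :=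
    inferInstanceAs (IsIntegrallyClosedIn (integralClosure ℚ ℂ) ℂ)
  have hxR : x ∉ (integralClosure ℚ ℂ).toSubring := fun h =>
    hx (IsIntegral.isAlgebraic h)
  obtain ⟨A, hA, hxA⟩ := Subring.exists_le_valuationSubring_of_isIntegrallyClosedIn hxR
  refine ⟨A, fun q => hA ?_, hxA⟩
  exact (integralClosure ℚ ℂ).algebraMap_mem q

/-- Outside the disc of radius `ρ` the leading term dominates strictly, so that orbits escape. -/
lemma le_of_finite_orbit {Γ : Type*} [LinearOrderedCommGroupWithZero Γ] (v : Valuation ℂ Γ)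
    {f : ℂ[X]} (hmonic : f.Monic) (hd : 2 ≤ f.natDegree) {ρ : Γ} (hρ : 1 < ρ)
    (hcoeff : ∀ j < f.natDegree, v (f.coeff j) ≤ ρ ^ (f.natDegree - j)) {z : ℂ}
    (hz : (Set.range fun n : ℕ => (fun w => f.eval w)^[n] z).Finite) : v z ≤ ρ := by
  by_contra! hlt
  have key : ∀ w : ℂ, ρ < v w → v w < v (f.eval w) := by
    intro w hw
    have hw1 : 1 < v w := hρ.trans hw
    have hw0 : 0 < v w := zero_lt_one.trans hw1
    have : v (f.eval w) = v w ^ f.natDegree := by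
      conv_lhs => rw [hmonic.as_sum]
      rw [eval_add, eval_pow, eval_X, eval_finsetSum, Valuation.map_add_eq_of_lt_left, map_pow]
      rw [map_pow]
      refine v.map_sum_lt (pow_pos hw0 _).ne' fun j hj => ?_
      have hj' : j < f.natDegree := Finset.mem_range.1 hj
      rw [eval_mul, eval_C, eval_pow, eval_X, map_mul, map_pow]
      calc v (f.coeff j) * v w ^ j ≤ ρ ^ (f.natDegree - j) * v w ^ j := by
            gcongr
            exact hcoeff j hj'
        _ < v w ^ (f.natDegree - j) * v w ^ j := by
            have h0 : 0 < v w ^ j := pow_pos hw0 _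
            have := pow_lt_pow_left₀ hw (zero_le_one.trans hρ.le) (Nat.sub_ne_zero_of_lt hj')
            exact (mul_lt_mul_iff_left₀ h0).2 this
        _ = v w ^ f.natDegree := by rw [← pow_add, Nat.sub_add_cancel hj'.le]
    rw [this]
    calc v w = v w ^ 1 := (pow_one _).symm
      _ < v w ^ f.natDegree := pow_lt_pow_right₀ hw1 (by omega)
  have hgt : ∀ n : ℕ, ρ < v ((fun w => f.eval w)^[n] z) := by
    intro n
    induction n with
    | zero => simpa using hlt
    | succ n ih =>
      rw [Function.iterate_succ_apply']
      exact ih.trans (key _ ih)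
  have hmono : StrictMono fun n : ℕ => v ((fun w => f.eval w)^[n] z) := by
    refine strictMono_nat_of_lt_succ fun n => ?_
    rw [Function.iterate_succ_apply']
    exact key _ (hgt n)
  refine Set.infinite_range_of_injective (f := fun n : ℕ => (fun w => f.eval w)^[n] z) ?_ hz
  exact fun m n hmn => hmono.injective (congrArg v hmn)

/-- A monic polynomial in characteristic zero all of whose critical values vanish is a power of a
linear polynomial. -/
lemma eq_pow_of_roots_derivative {k : Type*} [Field k] [CharZero k] {h : k[X]} (hmonic : h.Monic)
    (hd : 2 ≤ h.natDegree) (hsplit : (derivative h).Splits)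
    (hroot : ∀ u ∈ (derivative h).roots, h.IsRoot u) :
    ∃ u, h = (X - C u) ^ h.natDegree := by
  classical
  have hcard : (derivative h).roots.card = h.natDegree - 1 := by
    rw [← hsplit.natDegree_eq_card_roots, natDegree_derivative]
  have hcount : ∀ u ∈ (derivative h).roots,
      h.roots.count u = (derivative h).roots.count u + 1 := by
    intro u hu
    have h1 := derivative_rootMultiplicity_of_root (hroot u hu)
    have h2 := (rootMultiplicity_pos hmonic.ne_zero).2 (hroot u hu)
    rw [count_roots, count_roots]
    omega
  have hle : (derivative h).roots + (derivative h).roots.dedup ≤ h.roots := by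
    rw [Multiset.le_iff_count]
    intro u
    by_cases hu : u ∈ (derivative h).roots
    · rw [Multiset.count_add, hcount u hu, Multiset.count_dedup, if_pos hu]
    · rw [Multiset.count_add, Multiset.count_dedup, if_neg hu, Multiset.count_eq_zero_of_notMem hu]
      simp
  have hcardle := (Multiset.card_le_card hle).trans (card_roots' h)
  rw [Multiset.card_add, hcard] at hcardle
  obtain ⟨u, hu⟩ := Multiset.card_pos_iff_exists_mem.1 (show 0 < (derivative h).roots.card by omega)
  have hall : ∀ w ∈ (derivative h).roots, w = u := by
    intro w hw
    have hone : (derivative h).roots.toFinset.card ≤ 1 := by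
      rw [Finset.card_def, Multiset.toFinset_val]; omega
    exact Finset.card_le_one.1 hone w (Multiset.mem_toFinset.2 hw) u (Multiset.mem_toFinset.2 hu)
  have hrep := Multiset.eq_replicate_card.2 hall
  have hmult : h.rootMultiplicity u = h.natDegree := by
    rw [← count_roots, hcount u hu, hrep, Multiset.count_replicate_self, hcard]
    omega
  refine ⟨u, ?_⟩
  have hdvd : (X - C u) ^ h.natDegree ∣ h := hmult ▸ pow_rootMultiplicity_dvd h u
  exact (eq_of_monic_of_dvd_of_natDegree_le ((monic_X_sub_C u).pow _) hmonic hdvd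
    (by simp))

/-- The reduction step: a centred monic polynomial over `ℂ`, integral for a valuation of residue
characteristic zero, whose critical points are integral and whose critical values are in the
maximal ideal, has all its lower coefficients in the maximal ideal. -/
lemma coeff_lt_one (A : ValuationSubring ℂ) (hA : ∀ q : ℚ, (q : ℂ) ∈ A) {g : ℂ[X]}
    (hmonic : g.Monic) (hd : 2 ≤ g.natDegree) (hcent : g.coeff (g.natDegree - 1) = 0)
    (hint : ∀ i, g.coeff i ∈ A)
    (hcrit : ∀ u, (derivative g).eval u = 0 → u ∈ A ∧ A.valuation (g.eval u) < 1)
    {j : ℕ} (hj : j < g.natDegree) : A.valuation (g.coeff j) < 1 := by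
  let k := IsLocalRing.ResidueField A
  let res : A →+* k := IsLocalRing.residue A
  let toA : ℚ →+* A := (algebraMap ℚ ℂ).codRestrict A.toSubring hA
  have : CharZero k := charZero_of_injective_ringHom (res.comp toA).injective
  have hinj : Function.Injective (algebraMap A ℂ) := Subtype.val_injective
  obtain ⟨G, hG⟩ : ∃ G : A[X], G.map (algebraMap A ℂ) = g :=
    (mem_lifts g).1 ((lifts_iff_coeff_lifts g).2 fun n => ⟨⟨_, hint n⟩, rfl⟩)
  have hGm : G.Monic := by
    rw [← hG] at hmonic
    exact monic_of_injective hinj hmonic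
  have hGd : G.natDegree = g.natDegree := by
    rw [← hG, natDegree_map_eq_of_injective hinj]
  have hGc : ∀ i, ((G.coeff i : A) : ℂ) = g.coeff i := fun i => by
    rw [← hG, coeff_map]; rfl
  have hres : ∀ a : A, res a = 0 ↔ A.valuation a < 1 := fun a => by
    rw [← A.valuation_lt_one_iff]; exact IsLocalRing.residue_eq_zero_iff a
  obtain ⟨U, hU⟩ : ∃ U : Multiset A, U.map (algebraMap A ℂ) = (derivative g).roots := by
    have hmem : ∀ u ∈ (derivative g).roots, u ∈ A := fun u hu =>
      (hcrit u (isRoot_of_mem_roots hu)).1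
    refine ⟨(derivative g).roots.pmap Subtype.mk hmem, ?_⟩
    rw [Multiset.map_pmap]
    exact (Multiset.pmap_eq_map _ id _ hmem).trans (Multiset.map_id _)
  have hderiv : derivative G = C (g.natDegree : A) * (U.map fun u => X - C u).prod := by
    apply map_injective _ hinj
    have hlead : (derivative g).leadingCoeff = g.natDegree := by
      rw [leadingCoeff_derivative, hmonic.leadingCoeff, one_mul]
    rw [← derivative_map, hG, (IsAlgClosed.splits (derivative g)).eq_prod_roots, hlead, ← hU]
    simp [Polynomial.map_multiset_prod, Multiset.map_map, Function.comp_def]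
  set h := G.map res with hh
  have hhm : h.Monic := hGm.map _
  have hhd : h.natDegree = g.natDegree := by rw [hh, hGm.natDegree_map, hGd]
  have hderiv' : derivative h =
      C (g.natDegree : k) * ((U.map res).map fun u => X - C u).prod := by
    rw [hh, derivative_map, hderiv, Polynomial.map_mul, map_C, map_natCast,
      Polynomial.map_multiset_prod, Multiset.map_map, Multiset.map_map]
    simp
  have hd0 : (g.natDegree : k) ≠ 0 := Nat.cast_ne_zero.2 (by omega)
  have hroots : (derivative h).roots = U.map res := by
    rw [hderiv', roots_C_mul _ hd0, roots_multiset_prod_X_sub_C]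
  have hsplit : (derivative h).Splits := by
    rw [splits_iff_card_roots, hroots, natDegree_derivative, hhd]
    have := (IsAlgClosed.splits (derivative g)).natDegree_eq_card_roots
    rw [natDegree_derivative, ← hU, Multiset.card_map] at this
    rw [Multiset.card_map, this]
  obtain ⟨u, hu⟩ := eq_pow_of_roots_derivative hhm (hhd ▸ hd) hsplit (by
    intro w hw
    rw [hroots, Multiset.mem_map] at hw
    obtain ⟨a, ha, rfl⟩ := hw
    have hac : (a : ℂ) ∈ (derivative g).roots := hU ▸ Multiset.mem_map_of_mem _ ha
    have hv := (hcrit a (isRoot_of_mem_roots hac)).2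
    rw [IsRoot.def, hh, eval_map_apply, hres]
    have : ((G.eval a : A) : ℂ) = g.eval (a : ℂ) := by
      rw [← hG]
      exact (eval_map_apply (f := algebraMap A ℂ) (p := G) a).symm
    rwa [this])
  have hhc : ∀ i, h.coeff i = 0 ↔ A.valuation (g.coeff i) < 1 := fun i => by
    rw [hh, coeff_map, hres, hGc]
  have hu0 : u = 0 := by
    have h1 : h.coeff (h.natDegree - 1) = 0 := by
      rw [hhc, hhd, hcent, map_zero]; exact zero_lt_one
    have h2 : h.natDegree * u = 0 := by
      rw [hu, natDegree_pow, natDegree_X_sub_C, mul_one, sub_eq_add_neg, ← C_neg,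
        coeff_X_add_C_pow] at h1
      have e : h.natDegree - (h.natDegree - 1) = 1 := by omega
      have e2 : h.natDegree.choose (h.natDegree - 1) = h.natDegree := by
        rw [Nat.choose_symm (by omega : 1 ≤ h.natDegree), Nat.choose_one_right]
      rw [e, e2] at h1
      linear_combination -h1
    rw [hhd] at h2
    exact (mul_eq_zero.1 h2).resolve_left hd0
  rw [← hhc, hu, hu0, C_0, sub_zero, coeff_X_pow, if_neg (by omega)]

/-- A monic centred post-critically finite polynomial of degree `d ≥ 2`
over `ℂ` has all of its coefficients algebraic over `ℚ`. -/
theorem coeffs_algebraic_of_pcf (d : ℕ) (hd : 2 ≤ d) (f : Polynomial ℂ)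
    (hmonic : f.Monic) (hdeg : f.natDegree = d) (hcent : f.coeff (d - 1) = 0)
    (hpcf : ∀ c : ℂ, (derivative f).eval c = 0 →
      (Set.range fun n : ℕ => (fun w => f.eval w)^[n] c).Finite) :
    ∀ i : ℕ, IsAlgebraic ℚ (f.coeff i) := by
  intro i
  by_contra hi
  obtain ⟨A, hA, hiA⟩ := exists_valuationSubring hi
  set v := A.valuation with hv
  have hid : i < d := by
    by_contra! hle
    apply hiA
    rcases hle.eq_or_lt with rfl | hlt
    · rw [← hdeg, hmonic.coeff_natDegree]; exact A.one_mem
    · rw [coeff_eq_zero_of_natDegree_lt (hdeg ▸ hlt)]; exact A.zero_mem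
  have hr : ∀ j : ℕ, ∃ r : ℂ, j < d → r ^ (d - j) = f.coeff j := by
    intro j
    by_cases hj : j < d
    · obtain ⟨r, hr⟩ := IsAlgClosed.exists_pow_nat_eq (f.coeff j) (Nat.sub_pos_of_lt hj)
      exact ⟨r, fun _ => hr⟩
    · exact ⟨0, fun h => absurd h hj⟩
  choose r hr using hr
  obtain ⟨j, hj, hmax⟩ := Finset.exists_max_image (Finset.range d) (fun j => v (r j))
    ⟨i, Finset.mem_range.2 hid⟩
  have hjd : j < d := Finset.mem_range.1 hj
  set γ := r j with hγ
  have hbound : ∀ l < d, v (f.coeff l) ≤ v γ ^ (d - l) := by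
    intro l hl
    rw [← hr l hl, map_pow]
    exact pow_le_pow_left₀ zero_le (hmax l (Finset.mem_range.2 hl)) _
  have hγ1 : 1 < v γ := by
    by_contra! hle
    exact hiA ((A.valuation_le_one_iff _).1 ((hbound i hid).trans (pow_le_one₀ zero_le hle)))
  have hvγ0 : 0 < v γ := zero_lt_one.trans hγ1
  have hγ0 : γ ≠ 0 := (v.ne_zero_iff).1 hvγ0.ne'
  have horbit : ∀ z : ℂ, (Set.range fun n : ℕ => (fun w => f.eval w)^[n] z).Finite →
      v z ≤ v γ := fun z hz =>
    le_of_finite_orbit v hmonic (hdeg ▸ hd) hγ1 (by rw [hdeg]; exact hbound) hz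
  set g : ℂ[X] := C (γ ^ d)⁻¹ * f.comp (C γ * X) with hg
  have hgc : ∀ l, g.coeff l = (γ ^ d)⁻¹ * (f.coeff l * γ ^ l) := fun l => by
    rw [hg, coeff_C_mul, comp_C_mul_X_coeff]
  have hgd1 : g.coeff d = 1 := by
    rw [hgc, ← hdeg, hmonic.coeff_natDegree, one_mul, inv_mul_cancel₀ (pow_ne_zero _ hγ0)]
  have hgd0 : ∀ l, d < l → g.coeff l = 0 := fun l hl => by
    rw [hgc, coeff_eq_zero_of_natDegree_lt (hdeg ▸ hl)]; simp
  have hgle : g.natDegree ≤ d := natDegree_le_iff_coeff_eq_zero.2 hgd0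
  have hgm : g.Monic := monic_of_natDegree_le_of_coeff_eq_one d hgle hgd1
  have hgd : g.natDegree = d :=
    le_antisymm hgle (le_natDegree_of_ne_zero (by rw [hgd1]; exact one_ne_zero))
  have hsplit : ∀ l < d, v γ ^ d = v γ ^ (d - l) * v γ ^ l := fun l hl => by
    rw [← pow_add, Nat.sub_add_cancel hl.le]
  have hlt := coeff_lt_one A hA hgm (hgd ▸ hd) (by rw [hgd, hgc, hcent]; simp) (by
    intro l
    rcases lt_trichotomy l d with hl | rfl | hl
    · rw [← A.valuation_le_one_iff, hgc, map_mul, map_inv₀, map_mul, map_pow, map_pow,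
        inv_mul_le_iff₀ (pow_pos hvγ0 _), mul_one, ← hv, hsplit l hl]
      gcongr
      exact hbound l hl
    · rw [hgd1]; exact A.one_mem
    · rw [hgd0 l hl]; exact A.zero_mem) (by
    intro u hu
    have hcr : (derivative f).eval (γ * u) = 0 := by
      simpa [hg, derivative_comp, hγ0] using hu
    have hfin := hpcf _ hcr
    constructor
    · have := horbit _ hfin
      rw [map_mul] at this
      rw [← A.valuation_le_one_iff]
      exact (mul_le_iff_le_one_right hvγ0).1 this
    · have hfin' : (Set.range fun n : ℕ => (fun w => f.eval w)^[n] (f.eval (γ * u))).Finite := by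
        refine hfin.subset ?_
        rintro _ ⟨n, rfl⟩
        exact ⟨n + 1, rfl⟩
      have h1 := horbit _ hfin'
      have h2 : g.eval u = (γ ^ d)⁻¹ * f.eval (γ * u) := by simp [hg]
      rw [h2, map_mul, map_inv₀, map_pow, inv_mul_lt_iff₀ (pow_pos hvγ0 _), mul_one]
      calc v (f.eval (γ * u)) ≤ v γ ^ 1 := by rwa [pow_one]
        _ < v γ ^ d := pow_lt_pow_right₀ hγ1 (by omega)) (hgd.symm ▸ hjd)
  -- By the choice of `γ = r j`, the `j`-th coefficient of `g` is exactly `1`.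
  have hone : g.coeff j = 1 := by
    rw [hgc, ← hr j hjd, ← pow_add, Nat.sub_add_cancel hjd.le,
      inv_mul_cancel₀ (pow_ne_zero _ hγ0)]
  rw [hone, map_one] at hlt
  exact lt_irrefl _ hlt

end PCF
end
end

section
/- Let K be a field equipped with a nonarchimedean (ultrametric) absolute value |·|, let d ≥ 2, and let f(z) = a_d z^d + a_{d−1}z^{d−1} + ⋯ + a₁z + a₀ ∈ K[z] with a_d ≠ 0. Set C_f = max({1, |a_d|^{−1/(d−1)}} ∪ {|a_i/a_d|^{1/(d−i)} : 0 ≤ i < d}). If z ∈ K satisfies |z| > C_f, then the sequence d^{−N}·log max(1, |f^N(z)|) converges as N → ∞ to log|z| + (1/(d−1))·log|a_d|. -/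
/-!
Beyond the radius `C_f` the leading monomial strictly dominates every other monomial of `f`, so the
ultrametric inequality gives the exact formula `|f(w)| = |a_d| |w|^d`
(`apply_eval_eq_of_dominant`).  Since `|a_d| |w|^(d-1) > 1` there, `|f(w)| > |w|`, so the whole orbit
stays beyond that radius.  Iterating the formula gives
`log |f^N(z)| = d^N log |z| + (d^N - 1)/(d - 1) · log |a_d|`, where moreover `|f^N(z)| > 1`.
Dividing by `d^N` and letting `N → ∞` yields the limit.
-/

open Polynomial

noncomputable section

namespace PCF

/-- If the leading monomial strictly dominates each lower coefficient's monomial at `w`, it alone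
determines `|f(w)|`. -/
lemma apply_eval_eq_of_dominant {K : Type*} [Field K] (v : AbsoluteValue K ℝ)
    (hna : ∀ x y : K, v (x + y) ≤ max (v x) (v y)) (f : Polynomial K) {d : ℕ}
    (hdeg : f.natDegree = d) (hlead : f.coeff d ≠ 0) {w : K} (hw : 0 < v w)
    (hdom : ∀ i < d, v (f.coeff i) < v (f.coeff d) * v w ^ (d - i)) :
    v (f.eval w) = v (f.coeff d) * v w ^ d := by
  have ha : 0 < v (f.coeff d) := v.pos hlead
  have hlow : v (∑ i ∈ Finset.range d, f.coeff i * w ^ i) < v (f.coeff d * w ^ d) := by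
    refine Finset.sum_induction _ (fun x => v x < v (f.coeff d * w ^ d))
      (fun x y hx hy => (hna x y).trans_lt (max_lt hx hy)) ?_ ?_
    · simp only [map_zero, map_mul, map_pow]
      positivity
    · intro i hi
      have hid : i < d := Finset.mem_range.mp hi
      have hsplit : v w ^ d = v w ^ (d - i) * v w ^ i := by
        rw [← pow_add, Nat.sub_add_cancel hid.le]
      rw [map_mul, map_mul, map_pow, map_pow, hsplit, ← mul_assoc]
      exact mul_lt_mul_of_pos_right (hdom i hid) (pow_pos hw i)
  rw [Polynomial.eval_eq_sum_range, hdeg, Finset.sum_range_succ,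
    IsNonarchimedean.add_eq_right_of_lt hna hlow, map_mul, map_pow]

/-- Let `K` be a field with a nonarchimedean absolute value `v`, and let
`f = a_d z^d + ⋯ + a_0 ∈ K[z]` with `d ≥ 2` and `a_d ≠ 0`.  If
`|z| > C_f = max {1, |a_d|^{-1/(d-1)}, |a_i/a_d|^{1/(d-i)} (0 ≤ i < d)}`, then
`d^{-N} log max (1, |f^N(z)|)` converges to `log |z| + (1/(d-1)) log |a_d|`. -/
theorem escape_rate_nonarchimedean {K : Type} [Field K] (v : AbsoluteValue K ℝ)
    (hna : ∀ x y : K, v (x + y) ≤ max (v x) (v y))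
    (d : ℕ) (hd : 2 ≤ d) (f : Polynomial K) (hdeg : f.natDegree = d)
    (hlead : f.coeff d ≠ 0) (z : K)
    (hz : max (max 1 (v (f.coeff d) ^ (-(1 : ℝ) / ((d : ℝ) - 1))))
        (⨆ i : Fin d, v (f.coeff i / f.coeff d) ^ ((1 : ℝ) / ((d : ℝ) - (i : ℕ))))
      < v z) :
    Filter.Tendsto
      (fun N : ℕ => ((d : ℝ) ^ N)⁻¹ * Real.log (max 1 (v ((fun w => f.eval w)^[N] z))))
      Filter.atTop
      (nhds (Real.log (v z) + (1 / ((d : ℝ) - 1)) * Real.log (v (f.coeff d)))) := by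
  have ha : 0 < v (f.coeff d) := v.pos hlead
  obtain ⟨h12, h3⟩ := max_lt_iff.mp hz
  obtain ⟨h1, h2⟩ := max_lt_iff.mp h12
  have hz0 : 0 < v z := one_pos.trans h1
  have hd2 : (2 : ℝ) ≤ d := by exact_mod_cast hd
  have hd1 : (0 : ℝ) < (d : ℝ) - 1 := by linarith
  -- The three conditions packed in `C_f`, with the roots cleared.
  have hgrow : 1 ≤ v (f.coeff d) * v z ^ (d - 1) := by
    have h := Real.rpow_lt_rpow (by positivity) h2 hd1
    rw [← Real.rpow_mul ha.le, div_mul_cancel₀ _ hd1.ne', Real.rpow_neg_one,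
      show (d : ℝ) - 1 = ((d - 1 : ℕ) : ℝ) by rw [Nat.cast_sub (by omega)]; simp,
      Real.rpow_natCast] at h
    have h' := mul_lt_mul_of_pos_left h ha
    rw [mul_inv_cancel₀ ha.ne'] at h'
    exact h'.le
  have hdom : ∀ i < d, v (f.coeff i) < v (f.coeff d) * v z ^ (d - i) := by
    intro i hi
    have hid : (0 : ℝ) < (d : ℝ) - i := sub_pos.mpr (by exact_mod_cast hi)
    have hle := (le_ciSup (f := fun i : Fin d =>
      v (f.coeff i / f.coeff d) ^ ((1 : ℝ) / ((d : ℝ) - (i : ℕ))))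
      (Set.finite_range _).bddAbove ⟨i, hi⟩).trans_lt h3
    have h := Real.rpow_lt_rpow (by positivity) hle hid
    dsimp only at h
    rw [← Real.rpow_mul (v.nonneg _), one_div, inv_mul_cancel₀ hid.ne', Real.rpow_one,
      show (d : ℝ) - i = ((d - i : ℕ) : ℝ) by rw [Nat.cast_sub hi.le],
      Real.rpow_natCast, map_div₀, div_lt_iff₀ ha, mul_comm] at h
    exact h
  -- All of these persist for larger `|w|`.
  have hstep : ∀ w, v z ≤ v w → v (f.eval w) = v (f.coeff d) * v w ^ d := by
    intro w hw
    refine apply_eval_eq_of_dominant v hna f hdeg hlead (hz0.trans_le hw) fun i hi => ?_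
    exact (hdom i hi).trans_le (by gcongr)
  have hmono : ∀ w, v z ≤ v w → v z ≤ v (f.eval w) := by
    intro w hw
    have hw' : 1 ≤ v (f.coeff d) * v w ^ (d - 1) := hgrow.trans (by gcongr)
    rw [hstep w hw, show v w ^ d = v w ^ (d - 1) * v w by
      rw [← pow_succ, Nat.sub_add_cancel (by omega)], ← mul_assoc]
    exact hw.trans (le_mul_of_one_le_left (v.nonneg _) hw')
  have horbit : ∀ N : ℕ, v z ≤ v ((fun w => f.eval w)^[N] z) := by
    intro N
    induction N with
    | zero => simp
    | succ N ih =>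
      rw [Function.iterate_succ_apply']
      exact hmono _ ih
  have hlog : ∀ N : ℕ, Real.log (v ((fun w => f.eval w)^[N] z)) =
      (d : ℝ) ^ N * Real.log (v z)
        + ((d : ℝ) ^ N - 1) / ((d : ℝ) - 1) * Real.log (v (f.coeff d)) := by
    intro N
    induction N with
    | zero => simp
    | succ N ih =>
      have hpos := hz0.trans_le (horbit N)
      rw [Function.iterate_succ_apply', hstep _ (horbit N),
        Real.log_mul ha.ne' (pow_pos hpos d).ne', Real.log_pow, ih]
      field_simp
      ring
  have hseq : ∀ N : ℕ, ((d : ℝ) ^ N)⁻¹ * Real.log (max 1 (v ((fun w => f.eval w)^[N] z))) =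
      Real.log (v z) + ((1 - ((d : ℝ)⁻¹) ^ N) / ((d : ℝ) - 1)) * Real.log (v (f.coeff d)) := by
    intro N
    have hdN : (d : ℝ) ^ N ≠ 0 := by positivity
    rw [max_eq_right (h1.le.trans (horbit N)), hlog N, inv_pow]
    field_simp
  have hgeom : Filter.Tendsto (fun N : ℕ => ((d : ℝ)⁻¹) ^ N) Filter.atTop (nhds 0) :=
    tendsto_pow_atTop_nhds_zero_of_lt_one (by positivity) (inv_lt_one_of_one_lt₀ (by linarith))
  simp_rw [hseq]
  simpa using (((hgeom.const_sub 1).div_const ((d : ℝ) - 1)).mul_const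
    (Real.log (v (f.coeff d)))).const_add (Real.log (v z))

end PCF
end
end

section
/- Let K be a field of characteristic 0, let d ≥ 2, and let c = (c₁,…,c_{d−1}) ∈ K^{d−1}. If f_c(cᵢ) = 0 for every i = 1,…,d−1, then c₁ = c₂ = ⋯ = c_{d−1} = 0. -/
/-!
Each root of `f` of multiplicity `m + 1` is a root of `f'` of multiplicity `m`. All roots of `f'`
are roots of `f`, and so is `0`. If some `c i` were nonzero, the roots of `f` would contain those
of `f'` together with one extra copy of each of `0` and `c i`, hence at least `d + 1` roots
with multiplicity, although `f` has degree `d`.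
-/

open Polynomial

noncomputable section

namespace PCF

/-- Let `K` be a field of characteristic 0, `d ≥ 2`, and
`c = (c₁, …, c_{d-1}) ∈ K^{d-1}`.  Let `f_c ∈ K[z]` be the unique polynomial with
`f_c(0) = 0` and `f_c′(z) = (z-c₁)⋯(z-c_{d-1})`.  If `f_c(cᵢ) = 0` for every `i`, then
all the `cᵢ` vanish. -/
theorem crit_coords_zero_of_all_roots (K : Type) [Field K] [CharZero K] (d : ℕ)
    (hd : 2 ≤ d) (c : Fin (d - 1) → K) (f : Polynomial K)
    (h0 : f.eval 0 = 0) (hder : derivative f = ∏ i, (X - C (c i)))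
    (hroot : ∀ i, f.eval (c i) = 0) :
    ∀ i, c i = 0 := by
  classical
  have hroots : (derivative f).roots = Finset.univ.val.map c := by
    rw [hder]
    have h := roots_multiset_prod_X_sub_C (Finset.univ.val.map c)
    rwa [Multiset.map_map] at h
  have hf' : derivative f ≠ 0 := by
    rw [hder]
    exact Finset.prod_ne_zero_iff.mpr fun i _ => X_sub_C_ne_zero _
  have hf : f ≠ 0 := by
    rintro rfl
    simp at hf'
  have hdeg : f.natDegree ≤ d := by
    have h1 := natDegree_derivative f
    rw [hder, natDegree_prod_of_monic _ _ fun i _ => monic_X_sub_C _] at h1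
    simp at h1
    omega
  intro i
  by_contra hi
  -- A root of `f` is one more time a root of `f` than of `f'`; `0` and `c i` are two such points.
  have hcount : ∀ t, f.eval t = 0 → f.roots.count t = (derivative f).roots.count t + 1 := by
    intro t ht
    have h1 := derivative_rootMultiplicity_of_root (p := f) (t := t) ht
    have h2 := (rootMultiplicity_pos hf).mpr (show f.IsRoot t from ht)
    rw [count_roots, count_roots]
    omega
  have hle : c i ::ₘ 0 ::ₘ (derivative f).roots ≤ f.roots := by
    rw [Multiset.le_iff_count]
    intro t
    by_cases ht : f.eval t = 0
    · rw [hcount t ht, Multiset.count_cons, Multiset.count_cons]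
      split_ifs with h1 h2
      · exact absurd (h2.symm.trans h1) hi
      all_goals omega
    · have h1 : t ≠ c i := fun h => ht (h ▸ hroot i)
      have h2 : t ≠ 0 := fun h => ht (h ▸ h0)
      rw [Multiset.count_cons_of_ne h1, Multiset.count_cons_of_ne h2,
        Multiset.count_eq_zero_of_notMem]
      · exact Nat.zero_le _
      · rw [hroots, Multiset.mem_map]
        rintro ⟨j, -, rfl⟩
        exact ht (hroot j)
  have hcard := (Multiset.card_le_card hle).trans (card_roots' f)
  rw [hroots] at hcard
  simp at hcard
  omega

end PCF
end
end

section
/- Let c ∈ ℚ and let f(z) = z² + c. If the forward orbit {f^n(0) : n ≥ 0} of the critical point 0 is finite, then c ∈ {0, −1, −2}. -/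
/-!
If some function `N` on `ℚ` strictly increases under `f(z) = z² + c` at every `x` with `N c ≤ N x`,
then `N` strictly increases along the orbit `c, f(c), f²(c), …` of the critical value, so the
critical orbit is infinite (`orbit_infinite`). Three choices of `N` rule out all but three `c`:

* if a prime `p` divides the denominator of `c`, then `|c|_p > 1`, and `|x|_p ≥ |c|_p` forces
  `|x² + c|_p = |x|_p² > |x|_p`; so `c` is an integer;
* if `c ≥ 1`, then `x² + c > x` for every `x`;
* if `c < -2`, then `|x| ≥ |c|` forces `|x² + c| ≥ |x|² - |x| > |x|`.
-/

namespace PCF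

lemma orbit_infinite (c : ℚ) (N : ℚ → ℚ) (h : ∀ x, N c ≤ N x → N x < N (x ^ 2 + c)) :
    ¬ (Set.range fun n : ℕ => (fun z : ℚ => z ^ 2 + c)^[n] 0).Finite := by
  intro hfin
  have hle : ∀ n : ℕ, N c ≤ N ((fun z : ℚ => z ^ 2 + c)^[n + 1] 0) := by
    intro n
    induction n with
    | zero => simp
    | succ n ih =>
      rw [Function.iterate_succ_apply']
      exact ih.trans (h _ ih).le
  have hmono : StrictMono fun n : ℕ => N ((fun z : ℚ => z ^ 2 + c)^[n + 1] 0) := by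
    refine strictMono_nat_of_lt_succ fun n => ?_
    rw [Function.iterate_succ_apply' _ (n + 1)]
    exact h _ (hle n)
  refine Set.infinite_range_of_injective hmono.injective ((hfin.image N).subset ?_)
  rintro _ ⟨n, rfl⟩
  exact ⟨_, ⟨n + 1, rfl⟩, rfl⟩

lemma one_lt_padicNorm_of_dvd_den (c : ℚ) (p : ℕ) [Fact p.Prime] (hp : p ∣ c.den) :
    1 < padicNorm p c := by
  have hnum : padicNorm p (c.num : ℚ) = 1 := by
    rw [padicNorm.int_eq_one_iff]
    intro hd
    have hg := Nat.dvd_gcd (Int.natCast_dvd.mp hd) hp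
    rw [c.reduced.gcd_eq_one] at hg
    exact (Fact.out : p.Prime).one_lt.ne' (Nat.dvd_one.mp hg)
  have hden : padicNorm p (c.den : ℚ) < 1 := (padicNorm.nat_lt_one_iff _).mpr hp
  have hmul : padicNorm p c * padicNorm p (c.den : ℚ) = 1 := by
    rw [← padicNorm.mul, Rat.mul_den_eq_num, hnum]
  have h0 := padicNorm.nonneg (p := p) (c.den : ℚ)
  have h1 := padicNorm.nonneg (p := p) c
  by_contra! hcon
  nlinarith

lemma den_eq_one (c : ℚ)
    (hfin : (Set.range fun n : ℕ => (fun z : ℚ => z ^ 2 + c)^[n] 0).Finite) : c.den = 1 := by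
  by_contra hd
  obtain ⟨p, hp, hpd⟩ := Nat.exists_prime_and_dvd hd
  have : Fact p.Prime := ⟨hp⟩
  have hc := one_lt_padicNorm_of_dvd_den c p hpd
  refine orbit_infinite c (padicNorm p) (fun x hx => ?_) hfin
  have hsq : padicNorm p (x ^ 2) = padicNorm p x * padicNorm p x := by
    rw [sq, padicNorm.mul]
  have hlt : padicNorm p x < padicNorm p (x ^ 2) := by
    rw [hsq]; nlinarith
  rw [padicNorm.add_eq_max_of_ne (by linarith : padicNorm p c < padicNorm p (x ^ 2)).ne']
  exact lt_max_of_lt_left hlt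

/-- If `c ∈ ℚ` and the critical orbit of `f(z) = z² + c` (the forward
orbit of `0`) is finite, then `c ∈ {0, -1, -2}`. -/
theorem rational_pcf_quadratic (c : ℚ)
    (hfin : (Set.range fun n : ℕ => (fun z : ℚ => z ^ 2 + c)^[n] 0).Finite) :
    c = 0 ∨ c = -1 ∨ c = -2 := by
  have hupper : c < 1 := by
    by_contra! hc
    refine orbit_infinite c id (fun x _ => ?_) hfin
    simp only [id]
    nlinarith [sq_nonneg (2 * x - 1)]
  have hlower : -2 ≤ c := by
    by_contra! hc
    refine orbit_infinite c abs (fun x hx => ?_) hfin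
    rw [abs_of_neg (by linarith : c < 0)] at hx
    refine lt_of_lt_of_le ?_ (le_abs_self _)
    rw [← sq_abs x]
    nlinarith
  have hint : (c.num : ℚ) = c := Rat.coe_int_num_of_den_eq_one (den_eq_one c hfin)
  rw [← hint] at hupper hlower ⊢
  norm_cast at hupper hlower ⊢
  omega

end PCF
end

section
/- Let c ∈ ℂ and let f(z) = z² + c. If the forward orbit {f^n(0) : n ≥ 0} of the critical point 0 is finite, then c is an algebraic integer, i.e. c is a root of a monic polynomial with integer coefficients. -/
/-!
Regarded as a function of `c`, the iterate `fⁿ⁺¹(0)` is a monic integer polynomial of degree `2 ^ n`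
(`critPoly_succ`). A finite critical orbit has a coincidence `fᵐ(0) = fⁿ(0)` with `m < n`, so `c` is
a root of the difference of two such polynomials, which is monic because their degrees differ.
-/

namespace PCF

open Polynomial

/-- The integer polynomial in the parameter `c` whose value at `c` is the `n`-th iterate of
`z ↦ z ^ 2 + c` at `0`. -/
noncomputable def critPoly : ℕ → ℤ[X]
  | 0 => 0
  | n + 1 => critPoly n ^ 2 + X

theorem aeval_critPoly (c : ℂ) (n : ℕ) :
    aeval c (critPoly n) = (fun z : ℂ => z ^ 2 + c)^[n] 0 := by
  induction n with
  | zero => simp [critPoly]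
  | succ n ih => simp [critPoly, ih, Function.iterate_succ_apply', -Function.iterate_succ]

theorem critPoly_succ (n : ℕ) :
    (critPoly (n + 1)).Monic ∧ (critPoly (n + 1)).degree = (2 ^ n : ℕ) := by
  induction n with
  | zero => simp [critPoly, monic_X]
  | succ n ih =>
    obtain ⟨hm, hd⟩ := ih
    have hsq : (critPoly (n + 1) ^ 2).degree = (2 ^ (n + 1) : ℕ) := by
      rw [degree_pow, hd, pow_succ, mul_comm, nsmul_eq_mul]
      norm_cast
    have hlt : (X : ℤ[X]).degree < (critPoly (n + 1) ^ 2).degree := by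
      rw [hsq, degree_X]
      exact_mod_cast Nat.one_lt_two_pow n.succ_ne_zero
    rw [critPoly]
    exact ⟨(hm.pow 2).add_of_left hlt, by rw [degree_add_eq_left_of_degree_lt hlt, hsq]⟩

theorem degree_critPoly_lt {m n : ℕ} (h : m < n) :
    (critPoly m).degree < (critPoly n).degree := by
  obtain ⟨n, rfl⟩ := Nat.exists_eq_add_one_of_ne_zero (Nat.ne_zero_of_lt h)
  rw [(critPoly_succ n).2]
  cases m with
  | zero =>
    rw [critPoly, degree_zero]
    exact WithBot.bot_lt_coe _
  | succ m =>
    rw [(critPoly_succ m).2]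
    exact_mod_cast Nat.pow_lt_pow_right one_lt_two (Nat.lt_of_succ_lt_succ h)

/-- If `c ∈ ℂ` and the critical orbit of `f(z) = z² + c` (the forward
orbit of `0`) is finite, then `c` is an algebraic integer. -/
theorem pcf_quadratic_integral (c : ℂ)
    (hfin : (Set.range fun n : ℕ => (fun z : ℂ => z ^ 2 + c)^[n] 0).Finite) :
    IsIntegral ℤ c := by
  obtain ⟨m, n, hmn, heq⟩ : ∃ m n : ℕ, m < n ∧
      (fun z : ℂ => z ^ 2 + c)^[m] 0 = (fun z : ℂ => z ^ 2 + c)^[n] 0 := by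
    obtain ⟨m, n, hlt, h⟩ := hfin.exists_lt_map_eq_of_forall_mem
      (f := fun n : ℕ => (fun z : ℂ => z ^ 2 + c)^[n] 0) (fun n => Set.mem_range_self n)
    exact ⟨m, n, hlt, h⟩
  obtain ⟨k, rfl⟩ := Nat.exists_eq_add_one_of_ne_zero (Nat.ne_zero_of_lt hmn)
  refine ⟨critPoly (k + 1) - critPoly m,
    (critPoly_succ k).1.sub_of_left (degree_critPoly_lt hmn), ?_⟩
  rw [← aeval_def, map_sub, aeval_critPoly, aeval_critPoly, heq, sub_self]

end PCF
end

section
/- Let A, B ∈ ℚ and let f(z) = z³ + Az + B, viewed as a polynomial map ℂ → ℂ. If f is post-critically finite (every z ∈ ℂ with 3z² + A = 0 has finite forward orbit under f), then 4A ∈ ℤ, 8B ∈ ℤ, |A| ≤ 3^{3/2}, and |B| ≤ 3^{9/4}. -/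
/-!
The critical points are `±c` with `3c² = -A`, and the critical values are `f(±c) = B ∓ 2c³`.
Over any absolute value, a point of sufficiently large absolute value escapes: its orbit has
strictly increasing absolute values, hence is infinite (`infinite_orbit`). So both critical values
must lie inside the escape radius, and this bounds `A` and `B`.

* Archimedean place: by the parallelogram law one critical value `w` satisfies
  `‖w‖² ≥ ‖B‖² + 4‖c‖⁶`, while not escaping forces `‖w‖² ≤ 1 + ‖A‖ + ‖B‖/‖w‖ ≤ 2 + 3‖c‖²`.
  Hence `‖A‖ ≤ 4` and `‖B‖ ≤ 4`, which is stronger than what is claimed.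
* Non-archimedean places: put `t = ‖2‖ ≤ 1`. From `f(c) + f(-c) = 2B` and `f(c) - f(-c) = -4c³`
  one critical value has norm `≥ max (t‖B‖) (t²‖c‖³)`, and not escaping forces `t‖c‖ ≤ 1` and
  `t³‖B‖ ≤ 1` (`ultrametric_bounds`). Thus `‖4A‖ ≤ 1` and `‖8B‖ ≤ 1` at every prime, uniformly in
  the prime, so `4A` and `8B` are integers. The `p`-adic norm is the one of `PadicAlgCl p`, and the
  finiteness of the critical orbits is carried there from `ℂ` through `AlgebraicClosure ℚ`.
-/

namespace PCF

/-- The cubic map `z ↦ z³ + az + b` over an arbitrary field. -/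
def cubic {K : Type*} [Field K] (a b z : K) : K := z ^ 3 + a * z + b

/-- A point has an infinite orbit if it lies in a forward invariant set on which the map strictly
increases some real-valued function. -/
lemma infinite_orbit_s17 {X : Type*} (g : X → X) (N : X → ℝ) (S : Set X)
    (hS : ∀ x ∈ S, g x ∈ S) (hN : ∀ x ∈ S, N x < N (g x)) {z : X} (hz : z ∈ S) :
    ¬ (Set.range fun n : ℕ => g^[n] z).Finite := by
  have hmem : ∀ n : ℕ, g^[n] z ∈ S := by
    intro n
    induction n with
    | zero => exact hz
    | succ k ih => rw [Function.iterate_succ_apply']; exact hS _ ih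
  have hmono : StrictMono fun n : ℕ => N (g^[n] z) := by
    refine strictMono_nat_of_lt_succ fun n => ?_
    rw [Function.iterate_succ_apply']
    exact hN _ (hmem n)
  have hinj : Function.Injective fun n : ℕ => g^[n] z := fun m n h =>
    hmono.injective (congrArg N h)
  exact Set.infinite_range_of_injective hinj

lemma finite_orbit_apply {X : Type*} (g : X → X) {z : X}
    (h : (Set.range fun n : ℕ => g^[n] z).Finite) :
    (Set.range fun n : ℕ => g^[n] (g z)).Finite := by
  refine h.subset ?_
  rintro _ ⟨n, rfl⟩
  exact ⟨n + 1, Function.iterate_succ_apply g n z⟩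

/-! ### The archimedean place -/

lemma complex_escape (a b w : ℂ) (h : (1 + ‖a‖) * ‖w‖ + ‖b‖ < ‖w‖ ^ 3) :
    ¬ (Set.range fun n : ℕ => (cubic a b)^[n] w).Finite := by
  have key : ∀ z : ℂ, (1 + ‖a‖) * ‖z‖ + ‖b‖ < ‖z‖ ^ 3 → ‖z‖ < ‖cubic a b z‖ := by
    intro z hz
    have h1 : ‖z ^ 3‖ ≤ ‖cubic a b z‖ + ‖a * z‖ + ‖b‖ := by
      have : z ^ 3 = cubic a b z - a * z - b := by unfold cubic; ring
      rw [this]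
      exact (norm_sub_le _ _).trans (by gcongr; exact norm_sub_le _ _)
    rw [norm_pow, norm_mul] at h1
    linarith
  refine infinite_orbit_s17 (cubic a b) norm {z | (1 + ‖a‖) * ‖z‖ + ‖b‖ < ‖z‖ ^ 3} ?_ key h
  intro z hz
  have h1 := key z hz
  simp only [Set.mem_ofPred_eq] at hz ⊢
  have ha := norm_nonneg a
  have hb := norm_nonneg b
  have h0 := norm_nonneg z
  generalize ‖cubic a b z‖ = s at *
  generalize ‖z‖ = r at *
  have hr : 0 < r := by
    rcases h0.eq_or_lt with h | h
    · subst h; norm_num at hz; linarith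
    · exact h
  -- `s³ - (1 + ‖a‖) s - ‖b‖` is increasing in `s` beyond `r`, because `r² > 1 + ‖a‖`
  have hr2 : 1 + ‖a‖ < r ^ 2 := by
    by_contra hcon
    push Not at hcon
    nlinarith [mul_le_mul_of_nonneg_right hcon h0]
  have : 0 ≤ (s - r) * (s ^ 2 + s * r + r ^ 2 - (1 + ‖a‖)) :=
    mul_nonneg (by linarith) (by nlinarith [mul_pos (hr.trans h1) hr, sq_nonneg s])
  nlinarith

lemma complex_bounds (a b c : ℂ) (hc : 3 * c ^ 2 + a = 0)
    (h1 : (Set.range fun n : ℕ => (cubic a b)^[n] c).Finite)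
    (h2 : (Set.range fun n : ℕ => (cubic a b)^[n] (-c)).Finite) :
    ‖a‖ ≤ 4 ∧ ‖b‖ ≤ 4 := by
  have ha : a = -(3 * c ^ 2) := by linear_combination hc
  have hna : ‖a‖ = 3 * ‖c‖ ^ 2 := by rw [ha, norm_neg, norm_mul, norm_pow]; norm_num
  have hv1 : cubic a b c = b - 2 * c ^ 3 := by unfold cubic; rw [ha]; ring
  have hv2 : cubic a b (-c) = b + 2 * c ^ 3 := by unfold cubic; rw [ha]; ring
  have hpar := parallelogram_law_with_norm ℝ b (2 * c ^ 3)
  have hn2 : ‖2 * c ^ 3‖ = 2 * ‖c‖ ^ 3 := by rw [norm_mul, norm_pow]; norm_num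
  rw [hn2, ← hv1, ← hv2] at hpar
  obtain ⟨w, hw, hfin⟩ : ∃ w : ℂ, ‖b‖ ^ 2 + 4 * ‖c‖ ^ 6 ≤ ‖w‖ ^ 2 ∧
      (Set.range fun n : ℕ => (cubic a b)^[n] w).Finite := by
    rcases le_total ‖cubic a b c‖ ‖cubic a b (-c)‖ with h | h
    · refine ⟨_, ?_, finite_orbit_apply _ h2⟩
      nlinarith [norm_nonneg (cubic a b c)]
    · refine ⟨_, ?_, finite_orbit_apply _ h1⟩
      nlinarith [norm_nonneg (cubic a b (-c))]
  have hesc := not_lt.mp (mt (complex_escape a b w) (not_not.mpr hfin))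
  rw [hna] at hesc ⊢
  have hb0 := norm_nonneg b
  have hc0 := norm_nonneg c
  have hw0 := norm_nonneg w
  generalize ‖b‖ = β at *
  generalize ‖c‖ = x at *
  generalize ‖w‖ = m at *
  have hbm : β ≤ m := by
    refine abs_le_of_sq_le_sq' ?_ hw0 |>.2
    nlinarith [pow_nonneg hc0 6]
  have hm2 : m ^ 2 ≤ 2 + 3 * x ^ 2 := by
    rcases hw0.eq_or_lt with h | h
    · rw [← h]; nlinarith [sq_nonneg x]
    · by_contra hcon
      push Not at hcon
      nlinarith [mul_lt_mul_of_pos_right hcon h]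
  -- with `y = x²`, the inequality `4y³ ≤ 2 + 3y` forces `y ≤ 4/3`
  have hx : x ^ 2 ≤ 4 / 3 := by
    by_contra hcon
    push Not at hcon
    have h6 : x ^ 6 = x ^ 2 * (x ^ 2) ^ 2 := by ring
    have : 4 * x ^ 6 ≤ 2 + 3 * x ^ 2 := by nlinarith [sq_nonneg β]
    rw [h6] at this
    nlinarith [mul_lt_mul_of_pos_left hcon (by linarith : 0 < x ^ 2),
      mul_lt_mul_of_pos_left (by nlinarith : 16 / 9 < (x ^ 2) ^ 2) (by linarith : 0 < x ^ 2)]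
  exact ⟨by linarith, by nlinarith⟩

/-! ### Non-archimedean places -/

section Ultrametric

variable {K : Type*} [NormedField K] [IsUltrametricDist K]

lemma norm_sub_le_max_norm (x y : K) : ‖x - y‖ ≤ max ‖x‖ ‖y‖ := by
  simpa [sub_eq_add_neg] using IsUltrametricDist.norm_add_le_max x (-y)

lemma ultrametric_escape (a b w : K) (hw1 : 1 < ‖w‖) (hwa : ‖a‖ < ‖w‖ ^ 2) (hwb : ‖b‖ < ‖w‖ ^ 3) :
    ¬ (Set.range fun n : ℕ => (cubic a b)^[n] w).Finite := by
  have key : ∀ z : K, 1 < ‖z‖ ∧ ‖a‖ < ‖z‖ ^ 2 ∧ ‖b‖ < ‖z‖ ^ 3 → ‖z‖ < ‖cubic a b z‖ := by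
    rintro z ⟨hz, hza, hzb⟩
    have h1 : ‖z ^ 3‖ ≤ max (max ‖cubic a b z‖ ‖a * z‖) ‖b‖ := by
      have : z ^ 3 = cubic a b z - a * z - b := by unfold cubic; ring
      rw [this]
      exact (norm_sub_le_max_norm _ _).trans (max_le_max_right _ (norm_sub_le_max_norm _ _))
    rw [norm_pow, norm_mul] at h1
    have h2 : ‖a‖ * ‖z‖ < ‖z‖ ^ 3 := by nlinarith
    have h3 : ‖z‖ ^ 3 ≤ ‖cubic a b z‖ := by
      rcases le_max_iff.mp h1 with h | h
      · rcases le_max_iff.mp h with h | h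
        · exact h
        · linarith
      · linarith
    nlinarith
  refine infinite_orbit_s17 (cubic a b) norm {z | 1 < ‖z‖ ∧ ‖a‖ < ‖z‖ ^ 2 ∧ ‖b‖ < ‖z‖ ^ 3} ?_ key
    ⟨hw1, hwa, hwb⟩
  intro z hz
  have h := (key z hz).le
  obtain ⟨hz, hza, hzb⟩ := hz
  exact ⟨hz.trans_le h, hza.trans_le (by gcongr), hzb.trans_le (by gcongr)⟩

lemma ultrametric_bounds (a b c : K) (hc : 3 * c ^ 2 + a = 0) (h20 : (2 : K) ≠ 0)
    (h1 : (Set.range fun n : ℕ => (cubic a b)^[n] c).Finite)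
    (h2 : (Set.range fun n : ℕ => (cubic a b)^[n] (-c)).Finite) :
    ‖4 * a‖ ≤ 1 ∧ ‖8 * b‖ ≤ 1 := by
  have ha : a = -(3 * c ^ 2) := by linear_combination hc
  have h3 : ‖(3 : K)‖ ≤ 1 := by exact_mod_cast IsUltrametricDist.norm_natCast_le_one K 3
  have ht1 : ‖(2 : K)‖ ≤ 1 := by exact_mod_cast IsUltrametricDist.norm_natCast_le_one K 2
  have ht0 : 0 < ‖(2 : K)‖ := norm_pos_iff.mpr h20
  have hna : ‖a‖ ≤ ‖c‖ ^ 2 := by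
    rw [ha, norm_neg, norm_mul, norm_pow]
    exact mul_le_of_le_one_left (by positivity) h3
  have hsum : ‖(2 : K)‖ * ‖b‖ ≤ max ‖cubic a b c‖ ‖cubic a b (-c)‖ := by
    rw [← norm_mul, show 2 * b = cubic a b c + cubic a b (-c) by unfold cubic; ring]
    exact IsUltrametricDist.norm_add_le_max _ _
  have hdiff : ‖(2 : K)‖ ^ 2 * ‖c‖ ^ 3 ≤ max ‖cubic a b c‖ ‖cubic a b (-c)‖ := by
    rw [← norm_pow, ← norm_pow, ← norm_mul,
      show 2 ^ 2 * c ^ 3 = cubic a b (-c) - cubic a b c by unfold cubic; rw [ha]; ring, max_comm]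
    exact norm_sub_le_max_norm _ _
  obtain ⟨w, hw1, hw2, hfin⟩ : ∃ w : K, ‖(2 : K)‖ * ‖b‖ ≤ ‖w‖ ∧ ‖(2 : K)‖ ^ 2 * ‖c‖ ^ 3 ≤ ‖w‖ ∧
      (Set.range fun n : ℕ => (cubic a b)^[n] w).Finite := by
    rcases le_total ‖cubic a b c‖ ‖cubic a b (-c)‖ with h | h
    · rw [max_eq_right h] at hsum hdiff
      exact ⟨_, hsum, hdiff, finite_orbit_apply _ h2⟩
    · rw [max_eq_left h] at hsum hdiff
      exact ⟨_, hsum, hdiff, finite_orbit_apply _ h1⟩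
  -- the escape criterion, with `‖a‖ ≤ ‖c‖²` and `‖2‖ ‖b‖ ≤ ‖w‖` built in
  have hesc : 1 < ‖w‖ → ‖c‖ < ‖w‖ → ¬ 1 < ‖(2 : K)‖ * ‖w‖ ^ 2 := by
    intro hw hcw htw
    refine ultrametric_escape a b w hw (hna.trans_lt (by gcongr)) ?_ hfin
    have : ‖(2 : K)‖ * ‖b‖ < ‖(2 : K)‖ * ‖w‖ ^ 3 := by nlinarith
    exact lt_of_mul_lt_mul_left this ht0.le
  rw [norm_mul, norm_mul, show (4 : K) = 2 ^ 2 by norm_num, show (8 : K) = 2 ^ 3 by norm_num,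
    norm_pow, norm_pow]
  have hb0 := norm_nonneg b
  have hc0 := norm_nonneg c
  generalize ‖(2 : K)‖ = t at *
  generalize ‖a‖ = α at *
  generalize ‖b‖ = β at *
  generalize ‖c‖ = x at *
  generalize ‖w‖ = m at *
  have htx : t * x ≤ 1 := by
    by_contra hcon
    push Not at hcon
    have hx1 : 1 < x := by nlinarith
    have hmx : x < m := by
      have : 1 < (t * x) ^ 2 := by nlinarith
      nlinarith
    have htm : 1 < t * m := by nlinarith
    exact hesc (hx1.trans hmx) hmx (by nlinarith)
  refine ⟨?_, ?_⟩
  · have : t ^ 2 * α ≤ (t * x) ^ 2 := by rw [mul_pow]; gcongr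
    exact this.trans (pow_le_one₀ (by positivity) htx)
  · by_contra hcon
    push Not at hcon
    have htm : 1 < t ^ 2 * m := by nlinarith [mul_le_mul_of_nonneg_left hw1 (sq_nonneg t)]
    have hm0 : 0 < m := by
      by_contra h
      push Not at h
      nlinarith [sq_nonneg t]
    have htm1 : 1 < t * m := by nlinarith [mul_pos ht0 hm0]
    have hm1 : 1 < m := by nlinarith
    have hxm : x < m := by
      have : t * x < t * m := by linarith
      exact lt_of_mul_lt_mul_left this ht0.le
    exact hesc hm1 hxm (by nlinarith)

end Ultrametric

/-! ### Passage between places -/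

lemma map_cubic_iterate {K L : Type*} [Field K] [Field L] (φ : K →+* L) (a b z : K) (n : ℕ) :
    φ ((cubic a b)^[n] z) = (cubic (φ a) (φ b))^[n] (φ z) := by
  induction n with
  | zero => rfl
  | succ k ih =>
    rw [Function.iterate_succ_apply', Function.iterate_succ_apply', ← ih]
    simp [cubic]

lemma range_map_cubic {K L : Type*} [Field K] [Field L] (φ : K →+* L) (a b z : K) :
    (Set.range fun n : ℕ => (cubic (φ a) (φ b))^[n] (φ z)) =
      φ '' Set.range fun n : ℕ => (cubic a b)^[n] z := by
  rw [← Set.range_comp]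
  congr 1
  funext n
  exact (map_cubic_iterate φ a b z n).symm

lemma finite_orbit_map_iff {K L : Type*} [Field K] [Field L] (φ : K →+* L) (a b z : K) :
    (Set.range fun n : ℕ => (cubic (φ a) (φ b))^[n] (φ z)).Finite ↔
      (Set.range fun n : ℕ => (cubic a b)^[n] z).Finite := by
  rw [range_map_cubic]
  exact Set.finite_image_iff φ.injective.injOn

lemma exists_int_of_padic_norm_le_one (q : ℚ)
    (h : ∀ (p : ℕ) [Fact p.Prime], ‖(q : ℚ_[p])‖ ≤ 1) : ∃ n : ℤ, q = n := by
  have hden : q.den = 1 := by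
    by_contra hne
    obtain ⟨p, hp, hdvd⟩ := Nat.exists_prime_and_dvd hne
    have : Fact p.Prime := ⟨hp⟩
    have hu := PadicInt.isUnit_iff.mp (PadicInt.isUnit_den q (h p))
    have hlt : ‖((q.den : ℤ) : ℤ_[p])‖ < 1 :=
      (PadicInt.norm_int_lt_one_iff_dvd _).mpr (by exact_mod_cast hdvd)
    rw [Int.cast_natCast] at hlt
    exact hlt.ne hu
  exact ⟨q.num, ((Rat.den_eq_one_iff q).mp hden).symm⟩

lemma padic_bounds (A B : ℚ)
    (hpcf : ∀ z : ℂ, 3 * z ^ 2 + (A : ℂ) = 0 →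
      (Set.range fun n : ℕ => (cubic (A : ℂ) (B : ℂ))^[n] z).Finite) (p : ℕ) [Fact p.Prime] :
    ‖((4 * A : ℚ) : ℚ_[p])‖ ≤ 1 ∧ ‖((8 * B : ℚ) : ℚ_[p])‖ ≤ 1 := by
  -- stated for the canonical `ℚ`-algebra structure, which instance search does not identify with the
  -- one provided by `AlgebraicClosure`
  have : Algebra.IsAlgebraic ℚ (AlgebraicClosure ℚ) := by
    have h : (DivisionRing.toRatAlgebra : Algebra ℚ (AlgebraicClosure ℚ)) =
        AlgebraicClosure.instAlgebra ℚ := Subsingleton.elim _ _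
    rw [h]
    exact AlgebraicClosure.isAlgebraic ℚ
  let φ : AlgebraicClosure ℚ →+* ℂ := (IsAlgClosed.lift : AlgebraicClosure ℚ →ₐ[ℚ] ℂ).toRingHom
  let ψ : AlgebraicClosure ℚ →+* PadicAlgCl p :=
    (IsAlgClosed.lift : AlgebraicClosure ℚ →ₐ[ℚ] PadicAlgCl p).toRingHom
  have hfin : ∀ z : AlgebraicClosure ℚ, 3 * z ^ 2 + (A : AlgebraicClosure ℚ) = 0 →
      (Set.range fun n : ℕ => (cubic (A : PadicAlgCl p) (B : PadicAlgCl p))^[n] (ψ z)).Finite := by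
    intro z hz
    have h1 := hpcf (φ z) (by simpa [map_ofNat φ 3] using congrArg φ hz)
    rw [← map_ratCast φ A, ← map_ratCast φ B, finite_orbit_map_iff] at h1
    rw [← map_ratCast ψ A, ← map_ratCast ψ B, finite_orbit_map_iff]
    exact h1
  obtain ⟨c, hc⟩ := IsAlgClosed.exists_pow_nat_eq (-(A : AlgebraicClosure ℚ) / 3) two_pos
  have hc' : 3 * c ^ 2 + (A : AlgebraicClosure ℚ) = 0 := by rw [hc]; ring
  have hneg := hfin (-c) (by rw [neg_sq]; exact hc')
  rw [map_neg] at hneg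
  have hb := ultrametric_bounds (A : PadicAlgCl p) (B : PadicAlgCl p) (ψ c)
    (by simpa [map_ofNat ψ 3] using congrArg ψ hc') two_ne_zero (hfin c hc') hneg
  have hnorm : ∀ q : ℚ, ‖(q : ℚ_[p])‖ = ‖(q : PadicAlgCl p)‖ := by
    intro q
    rw [← PadicAlgCl.norm_extends, map_ratCast]
  rw [hnorm, hnorm]
  push_cast
  exact hb

/-- If `A, B ∈ ℚ` and `f(z) = z³ + Az + B` is post-critically finite as
a map `ℂ → ℂ` (every root of `3z² + A` has finite forward orbit), then `4A` and `8B` are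
integers, `|A| ≤ 3^{3/2}` and `|B| ≤ 3^{9/4}`. -/
theorem rational_pcf_cubic_bounds (A B : ℚ)
    (hpcf : ∀ z : ℂ, 3 * z ^ 2 + (A : ℂ) = 0 →
      (Set.range fun n : ℕ => (fun w : ℂ => w ^ 3 + (A : ℂ) * w + (B : ℂ))^[n] z).Finite) :
    (∃ a : ℤ, 4 * A = (a : ℚ)) ∧ (∃ b : ℤ, 8 * B = (b : ℚ)) ∧
      (|A| : ℝ) ≤ (3 : ℝ) ^ ((3 : ℝ) / 2) ∧ (|B| : ℝ) ≤ (3 : ℝ) ^ ((9 : ℝ) / 4) := by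
  change ∀ z : ℂ, 3 * z ^ 2 + (A : ℂ) = 0 →
      (Set.range fun n : ℕ => (cubic (A : ℂ) (B : ℂ))^[n] z).Finite at hpcf
  obtain ⟨c, hc⟩ := IsAlgClosed.exists_pow_nat_eq (-(A : ℂ) / 3) two_pos
  have hc' : 3 * c ^ 2 + (A : ℂ) = 0 := by rw [hc]; ring
  obtain ⟨hA, hB⟩ := complex_bounds A B c hc' (hpcf c hc')
    (hpcf (-c) (by rw [neg_sq]; exact hc'))
  have hcast : ∀ q : ℚ, ‖(q : ℂ)‖ = |(q : ℝ)| := by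
    intro q
    rw [← Complex.ofReal_ratCast, Complex.norm_real, Real.norm_eq_abs]
  rw [hcast] at hA hB
  refine ⟨exists_int_of_padic_norm_le_one _ fun p _ => (padic_bounds A B hpcf p).1,
    exists_int_of_padic_norm_le_one _ fun p _ => (padic_bounds A B hpcf p).2, ?_, ?_⟩
  · have h : (4 : ℝ) ≤ 3 ^ ((3 : ℝ) / 2) := by
      refine (abs_le_of_sq_le_sq' ?_ (by positivity)).2
      rw [← Real.rpow_natCast (3 ^ ((3 : ℝ) / 2)), ← Real.rpow_mul (by norm_num)]
      norm_num
    exact hA.trans h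
  · have h : (4 : ℝ) ≤ 3 ^ ((9 : ℝ) / 4) := by
      calc (4 : ℝ) ≤ 3 ^ (2 : ℝ) := by norm_num
        _ ≤ 3 ^ ((9 : ℝ) / 4) := Real.rpow_le_rpow_of_exponent_le (by norm_num) (by norm_num)
    exact hB.trans h

end PCF
end
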